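/- arXiv:2411.19152 — 9 statements merged into one kernel-verified Lean document; each statement's English description precedes it below -/
import Mathlib

section
/- For every L ∈ ℕ and every polynomial P ∈ ℂ[z] of degree at most L satisfying |P(e^{ix})| ≤ 1 for all x ∈ ℝ, there exist parameters θ, φ ∈ ℝ^{L+1}, λ ∈ ℝ, and a polynomial Q ∈ ℂ[z] of degree at most L with |P(e^{ix})|² + |Q(e^{ix})|² = 1 for all x ∈ ℝ, such that for all x ∈ ℝ the first column of the matrix product (∏_{j=1}^{L} R(θ_j, φ_j, x)) · R(θ₀, φ₀, λ) equals (P(e^{ix}), Q(e^{ix}))ᵀ, where ∏_{j=1}^{L} M_j denotes the ordered product M_L ⋯ M_1. -/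
/-!
The proof has two halves.

*Completion.* On the unit circle `1 - |P(z)|²` equals `F(z) / z ^ L` for the polynomial
`F = X ^ L - P * P~`, where `P~ = conjRefl L P` is the conjugate-reciprocal of `P`. It is
nonnegative there, so the Fejér–Riesz theorem (`fejer_riesz`) writes it as `|Q(z)|²` with
`deg Q ≤ L`. Fejér–Riesz is proved by induction on `L`: either both extreme coefficients vanish and
a factor `z` splits off, or there is a root `w ≠ 0`, which comes paired with `1 / conj w`
(`exists_factor`; on the circle the pairing means that `w` is a double root, since a nonnegative
function has zero derivative at its zeros). The pair contributes `|z - w|²` up to a constant.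

*Peeling off gates.* For a normalised pair `(P, Q)` of degree at most `L + 1`, the constant
coefficient of `P * P~ + Q * Q~ = X ^ (L + 1)` says that the vectors of constant and of top
coefficients are orthogonal in `ℂ²` (`coeff_orthogonal`). Hence angles exist (`exists_angles`) for
which the inverse gate sends `(P, Q)` to `(P', Q')` of degree at most `L`, again normalised, and
induction applies (`exists_params`).
-/

open Complex Matrix

/-- Ordered product `M_L ⋯ M_1` (empty product is `1`). -/
noncomputable def oprod (L : ℕ) (M : ℕ → Matrix (Fin 2) (Fin 2) ℂ) : Matrix (Fin 2) (Fin 2) ℂ :=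
  match L with
  | 0 => 1
  | n + 1 => M (n + 1) * oprod n M

/-- The generalized quantum signal processing building block
`R(θ, φ, λ) = [[e^{i(φ+λ)} cos θ, e^{iφ} sin θ], [e^{iλ} sin θ, −cos θ]]`. -/
noncomputable def Rgate (θ φ lam : ℝ) : Matrix (Fin 2) (Fin 2) ℂ :=
  !![Complex.exp (I * ((φ : ℂ) + (lam : ℂ))) * (Real.cos θ : ℂ),
       Complex.exp (I * (φ : ℂ)) * (Real.sin θ : ℂ);
     Complex.exp (I * (lam : ℂ)) * (Real.sin θ : ℂ),
       -(Real.cos θ : ℂ)]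

open Polynomial ComplexOrder

/-! ### The unit circle -/

/-- The point `e^{ix}` of the unit circle. -/
noncomputable def circ (x : ℝ) : ℂ := Complex.exp (I * (x : ℂ))

lemma circ_ne_zero (x : ℝ) : circ x ≠ 0 := Complex.exp_ne_zero _

lemma norm_circ (x : ℝ) : ‖circ x‖ = 1 := by
  rw [circ, mul_comm]; exact Complex.norm_exp_ofReal_mul_I x

lemma star_circ (x : ℝ) : star (circ x) = (circ x)⁻¹ := by
  rw [Complex.inv_eq_conj (norm_circ x)]; rfl

lemma hasDerivAt_circ (x : ℝ) : HasDerivAt circ (I * circ x) x := by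
  have h : HasDerivAt (fun y : ℝ => I * (y : ℂ)) (I * 1) x :=
    (Complex.ofRealCLM.hasDerivAt (x := x)).const_mul I
  have h2 := h.cexp
  simp only [mul_one] at h2
  rw [mul_comm]
  exact h2

lemma exists_circ_eq {w : ℂ} (hw : ‖w‖ = 1) : ∃ x, circ x = w := by
  refine ⟨w.arg, ?_⟩
  have := Complex.norm_mul_exp_arg_mul_I w
  rw [hw] at this
  rw [circ, mul_comm]
  simpa using this

lemma infinite_range_circ : (Set.range circ).Infinite := by
  have h : Set.range circ = Metric.sphere (0 : ℂ) 1 := by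
    ext w
    simp only [Set.mem_range, mem_sphere_zero_iff_norm]
    exact ⟨fun ⟨x, hx⟩ => hx ▸ norm_circ x, exists_circ_eq⟩
  rw [h]
  exact IsPreconnected.infinite_of_nontrivial
    (isPreconnected_sphere (by simp [Complex.rank_real_complex]) (0 : ℂ) 1)
    ⟨1, by simp, -1, by simp, by norm_num⟩

lemma poly_eq_of_circ {F G : ℂ[X]} (h : ∀ x, F.eval (circ x) = G.eval (circ x)) : F = G := by
  refine Polynomial.eq_of_infinite_eval_eq F G (infinite_range_circ.mono ?_)
  rintro _ ⟨x, rfl⟩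
  exact h x

/-! ### Conjugate-reciprocal polynomials -/

/-- The conjugate-reciprocal polynomial `z ^ N * conj (P (1 / conj z))`, meaningful for
`deg P ≤ N`. -/
noncomputable def conjRefl (N : ℕ) (P : ℂ[X]) : ℂ[X] := (P.map (starRingEnd ℂ)).reflect N

lemma natDegree_conjRefl_le {N : ℕ} {P : ℂ[X]} (hP : P.natDegree ≤ N) :
    (conjRefl N P).natDegree ≤ N := by
  refine natDegree_reflect_le.trans ?_
  simpa using hP

lemma eval_map_conj (P : ℂ[X]) (z : ℂ) :
    (P.map (starRingEnd ℂ)).eval z = star (P.eval (star z)) := by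
  have := Polynomial.eval_map_apply (starRingEnd ℂ) (p := P) (star z)
  simpa using this

lemma eval_conjRefl {N : ℕ} {P : ℂ[X]} (hP : P.natDegree ≤ N) {z : ℂ} (hz : z ≠ 0) :
    (conjRefl N P).eval z = z ^ N * star (P.eval (star z⁻¹)) := by
  have hz' : z⁻¹ ≠ 0 := inv_ne_zero hz
  let _ := invertibleOfNonzero hz'
  have h := eval₂_reflect_mul_pow (RingHom.id ℂ) z⁻¹ N (P.map (starRingEnd ℂ)) (by simpa using hP)
  simp only [invOf_eq_inv, inv_inv] at h
  rw [← Polynomial.eval, ← Polynomial.eval, eval_map_conj] at h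
  rw [← h, conjRefl, inv_pow]
  field_simp

lemma eval_conjRefl_circ {N : ℕ} {P : ℂ[X]} (hP : P.natDegree ≤ N) (x : ℝ) :
    (conjRefl N P).eval (circ x) = circ x ^ N * star (P.eval (circ x)) := by
  rw [eval_conjRefl hP (circ_ne_zero x), ← star_circ, star_star]

lemma conjRefl_coeff_zero (N : ℕ) (P : ℂ[X]) :
    (conjRefl N P).coeff 0 = star (P.coeff N) := by
  simp [conjRefl, coeff_reflect]

lemma conjRefl_coeff_self (N : ℕ) (P : ℂ[X]) :
    (conjRefl N P).coeff N = star (P.coeff 0) := by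
  simp [conjRefl, coeff_reflect]

/-- If `G(z) / z ^ L` is nonnegative, in particular real, on the circle, then `G` is
self-reciprocal. -/
lemma conjRefl_eq_self {L : ℕ} {G : ℂ[X]} (hG : G.natDegree ≤ 2 * L)
    (hpos : ∀ x, 0 ≤ G.eval (circ x) / circ x ^ L) : conjRefl (2 * L) G = G := by
  apply poly_eq_of_circ
  intro x
  have h0 := circ_ne_zero x
  rw [eval_conjRefl_circ hG]
  have h := (IsSelfAdjoint.of_nonneg (hpos x)).star_eq
  rw [star_div₀, star_pow, star_circ, eq_div_iff (pow_ne_zero _ h0), inv_pow, div_inv_eq_mul] at h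
  linear_combination h

/-! ### Fejér–Riesz factorisation -/

/-- Zeros of a nonnegative trigonometric polynomial come in pairs `w`, `1 / conj w`; on the circle
this says that they are at least double. -/
lemma exists_factor {L : ℕ} {G : ℂ[X]} (hG : G.natDegree ≤ 2 * L)
    (hpos : ∀ x, 0 ≤ G.eval (circ x) / circ x ^ L) {w : ℂ} (hw0 : w ≠ 0) (hw : G.eval w = 0) :
    ∃ G1 : ℂ[X], G = (X - C w) * ((X - C (star w⁻¹)) * G1) := by
  obtain ⟨K, rfl⟩ := dvd_iff_isRoot.mpr hw
  suffices h : K.eval (star w⁻¹) = 0 by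
    obtain ⟨G1, rfl⟩ := dvd_iff_isRoot.mpr h
    exact ⟨G1, rfl⟩
  by_cases hn : ‖w‖ = 1
  · obtain ⟨x, rfl⟩ := exists_circ_eq hn
    rw [← star_circ, star_star]
    set k : ℝ → ℂ := fun y => K.eval (circ y) / circ y ^ L with hk
    have hkd : DifferentiableAt ℝ k x := by
      have hc := (hasDerivAt_circ x).differentiableAt
      have h1 : DifferentiableAt ℝ (fun y => K.eval (circ y)) x :=
        ((K.differentiable (circ x)).restrictScalars ℝ).comp x hc
      exact h1.div (hc.pow L) (pow_ne_zero _ hw0)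
    have hd : HasDerivAt (fun y => (circ y - circ x) * k y) (I * circ x * k x) x := by
      have := ((hasDerivAt_circ x).sub_const (circ x)).mul hkd.hasDerivAt
      simp only [sub_self, zero_mul, add_zero] at this
      exact this
    have hnn : ∀ y, 0 ≤ (circ y - circ x) * k y := by
      intro y
      have := hpos y
      simpa [hk, mul_div_assoc] using this
    have hre := Complex.reCLM.hasFDerivAt.comp_hasDerivAt x hd
    have him := Complex.imCLM.hasFDerivAt.comp_hasDerivAt x hd
    have hre0 : (I * circ x * k x).re = 0 := by
      refine IsLocalMin.hasDerivAt_eq_zero (Filter.Eventually.of_forall fun y => ?_) hre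
      have := (Complex.le_def.mp (hnn y)).1
      simpa using this
    have him0 : (I * circ x * k x).im = 0 := by
      refine IsLocalMin.hasDerivAt_eq_zero (Filter.Eventually.of_forall fun y => ?_) him
      have := (Complex.le_def.mp (hnn y)).2.le
      simpa using this
    have h0 : I * circ x * k x = 0 := Complex.ext hre0 him0
    simpa [hk, hw0] using h0
  · have hr : (conjRefl (2 * L) ((X - C w) * K)).eval w = 0 := by
      rw [conjRefl_eq_self hG hpos]; exact hw
    rw [eval_conjRefl hG hw0] at hr
    have hne : star w⁻¹ - w ≠ 0 := by
      intro h
      apply hn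
      have h2 : ‖w‖⁻¹ = ‖w‖ := by
        have := congrArg norm (sub_eq_zero.mp h)
        simpa using this
      have hp : 0 < ‖w‖ := norm_pos_iff.mpr hw0
      have h3 : ‖w‖ * ‖w‖ = 1 := by
        nth_rewrite 1 [← h2]; exact inv_mul_cancel₀ hp.ne'
      nlinarith
    have h4 := (mul_eq_zero.mp hr).resolve_left (pow_ne_zero _ hw0)
    rw [star_eq_zero, eval_mul] at h4
    refine (mul_eq_zero.mp h4).resolve_left ?_
    simpa using hne

/-- On the circle, `(z - w) (z - 1 / conj w)` is `z * |z - w| ^ 2` up to a constant. -/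
lemma circ_factor {w : ℂ} (hw : w ≠ 0) (x : ℝ) :
    (circ x - w) * (circ x - star w⁻¹)
      = -(star w)⁻¹ * circ x * ((‖circ x - w‖ ^ 2 : ℝ) : ℂ) := by
  have h : ((‖circ x - w‖ ^ 2 : ℝ) : ℂ) = (circ x - w) * star (circ x - w) := by
    rw [Complex.ofReal_pow]; exact (Complex.mul_conj' _).symm
  have hs : star w ≠ 0 := star_ne_zero.mpr hw
  have h0 := circ_ne_zero x
  rw [h, star_sub, star_circ, star_inv₀]
  field_simp
  ring

/-- Nonnegativity on the circle minus one point extends to the whole circle by continuity. -/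
lemma nonneg_of_nonneg_off {L : ℕ} {G : ℂ[X]} {w : ℂ}
    (h : ∀ x, circ x ≠ w → 0 ≤ G.eval (circ x) / circ x ^ L) (x : ℝ) :
    0 ≤ G.eval (circ x) / circ x ^ L := by
  have hev : ∀ᶠ y in nhdsWithin x {x}ᶜ, circ y ≠ w :=
    (hasDerivAt_circ x).eventually_ne (mul_ne_zero I_ne_zero (circ_ne_zero x))
  have hc : ContinuousAt circ x := (hasDerivAt_circ x).continuousAt
  have hcont : ContinuousAt (fun y => G.eval (circ y) / circ y ^ L) x :=
    (G.continuous.continuousAt.comp hc).div (hc.pow L) (pow_ne_zero _ (circ_ne_zero x))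
  exact ge_of_tendsto (hcont.tendsto.mono_left nhdsWithin_le_nhds) (hev.mono fun y hy => h y hy)

/-- **Fejér–Riesz**: a trigonometric polynomial `G(z) / z ^ L` that is nonnegative on the circle is
`|Q| ^ 2` for a polynomial `Q` of degree at most `L`. -/
theorem fejer_riesz (L : ℕ) : ∀ G : ℂ[X], G.natDegree ≤ 2 * L →
    (∀ x, 0 ≤ G.eval (circ x) / circ x ^ L) →
    ∃ Q : ℂ[X], Q.natDegree ≤ L ∧
      ∀ x, G.eval (circ x) / circ x ^ L = ((‖Q.eval (circ x)‖ ^ 2 : ℝ) : ℂ) := by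
  induction L with
  | zero =>
    intro G hG hpos
    obtain ⟨c, rfl⟩ := natDegree_eq_zero.mp (Nat.le_zero.mp hG)
    have h0 : 0 ≤ c := by simpa using hpos 0
    obtain ⟨r, hr, rfl⟩ : ∃ r : ℝ, 0 ≤ r ∧ (r : ℂ) = c :=
      ⟨c.re, (Complex.le_def.mp h0).1, Complex.ext rfl (Complex.le_def.mp h0).2⟩
    refine ⟨C (Real.sqrt r : ℂ), by simp, fun x => ?_⟩
    simp only [eval_C, pow_zero, div_one, Complex.norm_real, Real.norm_eq_abs, sq_abs,
      Real.sq_sqrt hr]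
  | succ L ih =>
    intro G hG hpos
    by_cases hG0 : G.coeff 0 = 0
    · -- The two extreme coefficients vanish together, so `G = z * G1` with `deg G1 ≤ 2 L`.
      have htop : G.coeff (2 * (L + 1)) = 0 := by
        rw [← conjRefl_eq_self hG hpos, conjRefl_coeff_self, hG0, star_zero]
      obtain ⟨G1, rfl⟩ := X_dvd_iff.mpr hG0
      have hdeg : G1.natDegree ≤ 2 * L := by
        rw [natDegree_le_iff_coeff_eq_zero]
        intro n hn
        rcases Nat.lt_or_ge (2 * L + 1) n with h | h
        · rw [← coeff_X_mul]
          exact coeff_eq_zero_of_natDegree_lt (by omega)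
        · obtain rfl : n = 2 * L + 1 := by omega
          rw [← coeff_X_mul]; exact htop
      have heq : ∀ x, (X * G1).eval (circ x) / circ x ^ (L + 1) = G1.eval (circ x) / circ x ^ L := by
        intro x
        have h0 := circ_ne_zero x
        rw [eval_mul, eval_X, pow_succ]
        field_simp
      obtain ⟨Q, hQ, hQx⟩ := ih G1 hdeg fun x => heq x ▸ hpos x
      exact ⟨Q, by omega, fun x => (heq x).trans (hQx x)⟩
    · have htop : G.coeff (2 * (L + 1)) ≠ 0 := by
        rw [← conjRefl_eq_self hG hpos, conjRefl_coeff_self]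
        exact star_ne_zero.mpr hG0
      have hdegG : G.natDegree = 2 * (L + 1) := le_antisymm hG (le_natDegree_of_ne_zero htop)
      obtain ⟨w, hw⟩ := IsAlgClosed.exists_root G (by
        intro h
        have := natDegree_eq_of_degree_eq_some (n := 0) h
        omega)
      have hw0 : w ≠ 0 := by
        rintro rfl
        exact hG0 (by rw [coeff_zero_eq_eval_zero]; exact hw)
      obtain ⟨G1, hG1⟩ := exists_factor hG hpos hw0 hw
      have hG1ne : G1 ≠ 0 := by
        rintro rfl
        simp [hG1] at hG0
      have hdeg : G1.natDegree = 2 * L := by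
        rw [hG1, natDegree_mul (X_sub_C_ne_zero _) (mul_ne_zero (X_sub_C_ne_zero _) hG1ne),
          natDegree_mul (X_sub_C_ne_zero _) hG1ne, natDegree_X_sub_C, natDegree_X_sub_C] at hdegG
        omega
      set G2 : ℂ[X] := C (-(star w)⁻¹) * G1 with hG2
      have heq : ∀ x, G.eval (circ x) / circ x ^ (L + 1)
          = ((‖circ x - w‖ ^ 2 : ℝ) : ℂ) * (G2.eval (circ x) / circ x ^ L) := by
        intro x
        have h0 := circ_ne_zero x
        have hf := circ_factor hw0 x
        rw [hG1, eval_mul, eval_mul, ← mul_assoc]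
        simp only [eval_sub, eval_X, eval_C]
        rw [hf, hG2, eval_mul, eval_C, pow_succ]
        field_simp
        ring
      have hpos2 : ∀ x, 0 ≤ G2.eval (circ x) / circ x ^ L := by
        refine nonneg_of_nonneg_off (w := w) fun x hx => ?_
        have hp : 0 < ‖circ x - w‖ ^ 2 := by
          have := norm_pos_iff.mpr (sub_ne_zero.mpr hx)
          positivity
        have hp' : (0 : ℂ) < ((‖circ x - w‖ ^ 2 : ℝ) : ℂ) := by exact_mod_cast hp
        have h := hpos x
        rw [heq] at h
        exact le_of_mul_le_mul_left (by rwa [mul_zero]) hp'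
      obtain ⟨Q, hQ, hQx⟩ := ih G2 ((natDegree_C_mul_le _ _).trans hdeg.le) hpos2
      refine ⟨(X - C w) * Q, natDegree_mul_le.trans ?_, fun x => ?_⟩
      · rw [natDegree_X_sub_C]; omega
      · rw [heq, hQx, ← Complex.ofReal_mul, eval_mul, norm_mul, mul_pow]
        simp

/-- Existence of the complementary polynomial. -/
lemma exists_complement {L : ℕ} {P : ℂ[X]} (hd : P.natDegree ≤ L)
    (hP : ∀ x, ‖P.eval (circ x)‖ ≤ 1) :
    ∃ Q : ℂ[X], Q.natDegree ≤ L ∧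
      ∀ x, ‖P.eval (circ x)‖ ^ 2 + ‖Q.eval (circ x)‖ ^ 2 = 1 := by
  have heq : ∀ x, (X ^ L - P * conjRefl L P).eval (circ x) / circ x ^ L
      = ((1 - ‖P.eval (circ x)‖ ^ 2 : ℝ) : ℂ) := by
    intro x
    have h0 := circ_ne_zero x
    have h : ((‖P.eval (circ x)‖ ^ 2 : ℝ) : ℂ) = P.eval (circ x) * star (P.eval (circ x)) := by
      rw [Complex.ofReal_pow]; exact (Complex.mul_conj' _).symm
    rw [Complex.ofReal_sub, h, eval_sub, eval_mul, eval_conjRefl_circ hd]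
    simp only [eval_pow, eval_X, Complex.ofReal_one]
    field_simp
  obtain ⟨Q, hQ, hQx⟩ := fejer_riesz L (X ^ L - P * conjRefl L P)
    (by
      refine (natDegree_sub_le _ _).trans (max_le ?_ (natDegree_mul_le.trans ?_))
      · rw [natDegree_X_pow]; omega
      · have := natDegree_conjRefl_le hd
        omega)
    (fun x => by
      rw [heq]
      have h1 := hP x
      have h2 := norm_nonneg (P.eval (circ x))
      have : 0 ≤ 1 - ‖P.eval (circ x)‖ ^ 2 := by nlinarith
      exact_mod_cast this)
  refine ⟨Q, hQ, fun x => ?_⟩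
  have h := hQx x
  rw [heq] at h
  have h' := Complex.ofReal_injective h
  linarith

/-! ### Peeling off one gate -/

/-- The normalisation `|P| ^ 2 + |Q| ^ 2 = 1` makes the vectors of constant coefficients and of
top coefficients orthogonal. -/
lemma coeff_orthogonal {L : ℕ} {P Q : ℂ[X]} (hP : P.natDegree ≤ L + 1) (hQ : Q.natDegree ≤ L + 1)
    (h : ∀ x, ‖P.eval (circ x)‖ ^ 2 + ‖Q.eval (circ x)‖ ^ 2 = 1) :
    P.coeff 0 * star (P.coeff (L + 1)) + Q.coeff 0 * star (Q.coeff (L + 1)) = 0 := by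
  have hpoly : P * conjRefl (L + 1) P + Q * conjRefl (L + 1) Q = X ^ (L + 1) := by
    apply poly_eq_of_circ
    intro x
    have hs : ∀ a : ℂ, a * star a = ((‖a‖ ^ 2 : ℝ) : ℂ) := fun a => by
      rw [Complex.ofReal_pow]; exact Complex.mul_conj' _
    have hx : P.eval (circ x) * star (P.eval (circ x))
        + Q.eval (circ x) * star (Q.eval (circ x)) = 1 := by
      rw [hs, hs, ← Complex.ofReal_add, h x, Complex.ofReal_one]
    rw [eval_add, eval_mul, eval_mul, eval_conjRefl_circ hP, eval_conjRefl_circ hQ, eval_pow,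
      eval_X]
    linear_combination circ x ^ (L + 1) * hx
  have h0 := congrArg (fun F : ℂ[X] => F.coeff 0) hpoly
  simpa [mul_coeff_zero, conjRefl_coeff_zero] using h0

/-- Polar form of a vector in `ℂ²`. -/
lemma exists_polar (u v : ℂ) : ∃ (θ φ α r : ℝ), r ^ 2 = ‖u‖ ^ 2 + ‖v‖ ^ 2 ∧
    u = r * (circ α * circ φ * (Real.cos θ : ℂ)) ∧ v = r * (circ α * (Real.sin θ : ℂ)) := by
  set c : ℂ := ⟨‖u‖, ‖v‖⟩ with hc
  have h1 : ‖c‖ * Real.cos c.arg = ‖u‖ := Complex.norm_mul_cos_arg c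
  have h2 : ‖c‖ * Real.sin c.arg = ‖v‖ := Complex.norm_mul_sin_arg c
  have hu : u = ‖u‖ * circ u.arg := by
    rw [circ, mul_comm I]; exact (Complex.norm_mul_exp_arg_mul_I u).symm
  have hv : v = ‖v‖ * circ v.arg := by
    rw [circ, mul_comm I]; exact (Complex.norm_mul_exp_arg_mul_I v).symm
  have hcc : circ v.arg * circ (u.arg - v.arg) = circ u.arg := by
    simp only [circ]
    rw [← Complex.exp_add]
    congr 1
    push_cast
    ring
  refine ⟨c.arg, u.arg - v.arg, v.arg, ‖c‖, ?_, ?_, ?_⟩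
  · rw [← h1, ← h2]
    have := Real.sin_sq_add_cos_sq c.arg
    linear_combination (-‖c‖ ^ 2) * this
  · rw [hcc]
    conv_lhs => rw [hu, ← h1]
    push_cast
    ring
  · conv_lhs => rw [hv, ← h2]
    push_cast
    ring

/-- Angles for which the inverse of `R(θ, φ, ·)` removes both the constant coefficients of the
first row and the top coefficients of the second. -/
lemma exists_angles {p0 q0 pL qL : ℂ} (h : p0 * star pL + q0 * star qL = 0) :
    ∃ θ φ : ℝ,
      (Real.cos θ : ℂ) * (circ φ)⁻¹ * p0 + (Real.sin θ : ℂ) * q0 = 0 ∧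
      (Real.sin θ : ℂ) * (circ φ)⁻¹ * pL - (Real.cos θ : ℂ) * qL = 0 := by
  -- It suffices to find a nonzero vector orthogonal to `(p0, q0)` and parallel to `(pL, qL)`.
  have key : ∀ u v : ℂ, (u ≠ 0 ∨ v ≠ 0) → p0 * star u + q0 * star v = 0 → v * pL = u * qL →
      ∃ θ φ : ℝ,
      (Real.cos θ : ℂ) * (circ φ)⁻¹ * p0 + (Real.sin θ : ℂ) * q0 = 0 ∧
      (Real.sin θ : ℂ) * (circ φ)⁻¹ * pL - (Real.cos θ : ℂ) * qL = 0 := by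
    intro u v hne ho hp
    obtain ⟨θ, φ, α, r, hr, hu, hv⟩ := exists_polar u v
    have hr0 : (r : ℂ) ≠ 0 := by
      intro h0
      have h0' : r = 0 := by exact_mod_cast h0
      rw [h0'] at hu hv
      simp at hu hv
      tauto
    have hα := circ_ne_zero α
    have hφ := circ_ne_zero φ
    refine ⟨θ, φ, ?_, ?_⟩
    · have hsr : ∀ t : ℝ, star (t : ℂ) = t := fun t => Complex.conj_ofReal t
      rw [hu, hv] at ho
      simp only [star_mul', star_circ, hsr] at ho
      have h3 : (r : ℂ) * (circ α)⁻¹ *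
          ((Real.cos θ : ℂ) * (circ φ)⁻¹ * p0 + (Real.sin θ : ℂ) * q0) = 0 := by
        linear_combination ho
      exact (mul_eq_zero.mp h3).resolve_left (mul_ne_zero hr0 (inv_ne_zero hα))
    · rw [hu, hv] at hp
      have h3 : (r : ℂ) * circ α * circ φ *
          ((Real.sin θ : ℂ) * (circ φ)⁻¹ * pL - (Real.cos θ : ℂ) * qL) = 0 := by
        field_simp
        linear_combination hp
      exact (mul_eq_zero.mp h3).resolve_left (mul_ne_zero (mul_ne_zero hr0 hα) hφ)
  by_cases hb : pL ≠ 0 ∨ qL ≠ 0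
  · exact key pL qL hb h (mul_comm _ _)
  · push Not at hb
    obtain ⟨rfl, rfl⟩ := hb
    by_cases ha : p0 = 0 ∧ q0 = 0
    · obtain ⟨rfl, rfl⟩ := ha
      exact ⟨0, 0, by simp, by simp⟩
    · refine key (star q0) (-star p0) ?_ ?_ ?_
      · simp only [ne_eq, neg_eq_zero, star_eq_zero]; tauto
      · simp only [star_neg, star_star]; ring
      · simp

lemma oprod_congr (L : ℕ) {M N : ℕ → Matrix (Fin 2) (Fin 2) ℂ}
    (h : ∀ j, j ≠ 0 → j ≤ L → M j = N j) : oprod L M = oprod L N := by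
  induction L with
  | zero => rfl
  | succ n ih =>
    rw [oprod, oprod, h (n + 1) (by omega) le_rfl, ih fun j h0 hj => h j h0 (by omega)]

/-- Every normalised pair of polynomials of degree at most `L` is a first column. -/
lemma exists_params (L : ℕ) : ∀ P Q : ℂ[X], P.natDegree ≤ L → Q.natDegree ≤ L →
    (∀ x, ‖P.eval (circ x)‖ ^ 2 + ‖Q.eval (circ x)‖ ^ 2 = 1) →
    ∃ (θ φ : ℕ → ℝ) (lam : ℝ), ∀ x : ℝ,
      (oprod L (fun j => Rgate (θ j) (φ j) x) * Rgate (θ 0) (φ 0) lam) 0 0 = P.eval (circ x) ∧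
      (oprod L (fun j => Rgate (θ j) (φ j) x) * Rgate (θ 0) (φ 0) lam) 1 0 = Q.eval (circ x) := by
  induction L with
  | zero =>
    intro P Q hP hQ h
    obtain ⟨p, rfl⟩ := natDegree_eq_zero.mp (Nat.le_zero.mp hP)
    obtain ⟨q, rfl⟩ := natDegree_eq_zero.mp (Nat.le_zero.mp hQ)
    obtain ⟨θ, φ, α, r, hr, hu, hv⟩ := exists_polar p q
    have hr1 : r ^ 2 = 1 := by
      rw [hr]; simpa using h 0
    -- A negative radius is absorbed by shifting `θ` by `π`.
    obtain ⟨θ', hc, hs⟩ : ∃ θ' : ℝ, (Real.cos θ' = r * Real.cos θ) ∧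
        Real.sin θ' = r * Real.sin θ := by
      rw [pow_two] at hr1
      rcases mul_self_eq_one_iff.mp hr1 with rfl | rfl
      · exact ⟨θ, by simp, by simp⟩
      · exact ⟨θ + Real.pi, by simp, by simp⟩
    refine ⟨fun _ => θ', fun _ => φ, α, fun x => ?_⟩
    have he : Complex.exp (I * ((φ : ℂ) + (α : ℂ))) = circ α * circ φ := by
      rw [circ, circ, ← Complex.exp_add]; congr 1; ring
    constructor
    · simp only [oprod, one_mul, Rgate, Matrix.of_apply, Matrix.cons_val', Matrix.cons_val_zero,
        eval_C]
      rw [he, hc, hu]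
      push_cast
      ring
    · simp only [oprod, one_mul, Rgate, Matrix.of_apply, Matrix.cons_val', Matrix.cons_val_zero,
        Matrix.cons_val_one, eval_C]
      rw [hs, hv, circ]
      push_cast
      ring
  | succ L ih =>
    intro P Q hP hQ h
    obtain ⟨t, f, h0, hL⟩ := exists_angles (coeff_orthogonal hP hQ h)
    set c : ℂ := (Real.cos t : ℂ) with hc
    set s : ℂ := (Real.sin t : ℂ) with hs
    have hcs : c ^ 2 + s ^ 2 = 1 := by
      rw [hc, hs]; exact_mod_cast Real.cos_sq_add_sin_sq t
    have hf := circ_ne_zero f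
    -- `(z P', Q')` is the image of `(P, Q)` under the inverse gate.
    obtain ⟨P', hP'⟩ : X ∣ C (c * (circ f)⁻¹) * P + C s * Q := by
      rw [X_dvd_iff]; simpa using h0
    set Q' : ℂ[X] := C (s * (circ f)⁻¹) * P - C c * Q with hQ'
    have hdegA : (C (c * (circ f)⁻¹) * P + C s * Q).natDegree ≤ L + 1 :=
      (natDegree_add_le _ _).trans
        (max_le ((natDegree_C_mul_le _ _).trans hP) ((natDegree_C_mul_le _ _).trans hQ))
    have hdegP' : P'.natDegree ≤ L := by
      rw [natDegree_le_iff_coeff_eq_zero]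
      intro n hn
      rw [← coeff_X_mul, ← hP']
      exact coeff_eq_zero_of_natDegree_lt (by omega)
    have hdegQ' : Q'.natDegree ≤ L := by
      rw [natDegree_le_iff_coeff_eq_zero]
      intro n hn
      rcases Nat.lt_or_ge (L + 1) n with h | h
      · rw [hQ', coeff_sub, coeff_C_mul, coeff_C_mul,
          coeff_eq_zero_of_natDegree_lt (hP.trans_lt h),
          coeff_eq_zero_of_natDegree_lt (hQ.trans_lt h)]
        simp
      · obtain rfl : n = L + 1 := by omega
        rw [hQ', coeff_sub, coeff_C_mul, coeff_C_mul]
        exact hL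
    have eP : ∀ x, circ x * P'.eval (circ x)
        = c * (circ f)⁻¹ * P.eval (circ x) + s * Q.eval (circ x) := by
      intro x
      have := congrArg (fun F : ℂ[X] => F.eval (circ x)) hP'
      simpa using this.symm
    have eQ : ∀ x, Q'.eval (circ x) = s * (circ f)⁻¹ * P.eval (circ x) - c * Q.eval (circ x) := by
      intro x
      simp [hQ']
    have hnorm : ∀ x, ‖P'.eval (circ x)‖ ^ 2 + ‖Q'.eval (circ x)‖ ^ 2 = 1 := by
      intro x
      have h1 : ‖P'.eval (circ x)‖ = ‖circ x * P'.eval (circ x)‖ := by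
        rw [norm_mul, norm_circ, one_mul]
      have hsq : ∀ a : ℂ, ((‖a‖ ^ 2 : ℝ) : ℂ) = a * star a := fun a => by
        rw [Complex.ofReal_pow]; exact (Complex.mul_conj' _).symm
      have hx := h x
      rw [h1, eP, eQ]
      apply Complex.ofReal_injective
      apply_fun ((↑) : ℝ → ℂ) at hx
      rw [Complex.ofReal_add, hsq, hsq, Complex.ofReal_one] at hx ⊢
      have hcr : star c = c := Complex.conj_ofReal _
      have hsr : star s = s := Complex.conj_ofReal _
      simp only [star_add, star_sub, star_mul', star_inv₀, hcr, hsr, star_circ, inv_inv]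
      field_simp
      linear_combination (c ^ 2 + s ^ 2) * circ f * hx + circ f * hcs
    obtain ⟨θ, φ, lam, hpar⟩ := ih P' Q' hdegP' hdegQ' hnorm
    refine ⟨Function.update θ (L + 1) t, Function.update φ (L + 1) f, lam, fun x => ?_⟩
    obtain ⟨hp, hq⟩ := hpar x
    have hM : oprod L (fun j => Rgate (Function.update θ (L + 1) t j)
        (Function.update φ (L + 1) f j) x) = oprod L (fun j => Rgate (θ j) (φ j) x) := by
      refine oprod_congr L fun j _ hj => ?_
      have : j ≠ L + 1 := by omega
      simp [this]
    rw [oprod, hM, Matrix.mul_assoc]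
    have hz : (0 : ℕ) ≠ L + 1 := by omega
    simp only [Function.update_self, Function.update_of_ne hz]
    have he : Complex.exp (I * ((f : ℂ) + (x : ℂ))) = circ f * circ x := by
      rw [circ, circ, ← Complex.exp_add]; congr 1; ring
    have hef : Complex.exp (I * (f : ℂ)) = circ f := rfl
    have hex : Complex.exp (I * (x : ℂ)) = circ x := rfl
    constructor
    · rw [Matrix.mul_apply, Fin.sum_univ_two, hp, hq]
      simp only [Rgate, Matrix.of_apply, Matrix.cons_val', Matrix.cons_val_zero,
        Matrix.cons_val_one]
      rw [he, hef, ← hc, ← hs, eQ]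
      have e1 := eP x
      have e2 : circ f * (circ f)⁻¹ = 1 := mul_inv_cancel₀ hf
      linear_combination circ f * c * e1 + (c ^ 2 + s ^ 2) * P.eval (circ x) * e2
        + P.eval (circ x) * hcs
    · rw [Matrix.mul_apply, Fin.sum_univ_two, hp, hq]
      simp only [Rgate, Matrix.of_apply, Matrix.cons_val', Matrix.cons_val_zero,
        Matrix.cons_val_one]
      rw [hex, ← hc, ← hs, eQ]
      linear_combination s * eP x + Q.eval (circ x) * hcs

/-! ### The factorisation -/

/-- Generalized quantum signal processing: every polynomial `P` of degree at most `L` with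
`|P(e^{ix})| ≤ 1` appears, together with a complementary polynomial `Q`, as the first column of
`(∏_{j=1}^{L} R(θ_j, φ_j, x)) · R(θ₀, φ₀, λ)`. -/
theorem gqsp (L : ℕ) (P : Polynomial ℂ) (hdeg : P.degree ≤ (L : ℕ))
    (hP : ∀ x : ℝ, ‖P.eval (Complex.exp (I * (x : ℂ)))‖ ≤ 1) :
    ∃ (θ φ : ℕ → ℝ) (lam : ℝ) (Q : Polynomial ℂ),
      Q.degree ≤ (L : ℕ) ∧
      (∀ x : ℝ,
        ‖P.eval (Complex.exp (I * (x : ℂ)))‖ ^ 2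
          + ‖Q.eval (Complex.exp (I * (x : ℂ)))‖ ^ 2 = 1) ∧
      (∀ x : ℝ,
        (oprod L (fun j => Rgate (θ j) (φ j) x) * Rgate (θ 0) (φ 0) lam) 0 0
            = P.eval (Complex.exp (I * (x : ℂ))) ∧
        (oprod L (fun j => Rgate (θ j) (φ j) x) * Rgate (θ 0) (φ 0) lam) 1 0
            = Q.eval (Complex.exp (I * (x : ℂ)))) := by
  have hd : P.natDegree ≤ L := natDegree_le_of_degree_le hdeg
  obtain ⟨Q, hQ, hn⟩ := exists_complement hd hP
  obtain ⟨θ, φ, lam, h⟩ := exists_params L P Q hd hQ hn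
  exact ⟨θ, φ, lam, Q, degree_le_of_natDegree_le hQ, hn, h⟩
end

section
/- Let w ∈ ℝ with w ∉ πℤ. Then for every n ∈ ℤ, (1/2)·∫₀² a_w(x)·e^{−i n π x} dx = −i·w·((−1)ⁿ e^{iw} − 1)/(w² − (nπ)²). -/
/-!
Splitting the integral at `x = 1`, the integrand is `e^{i(w-nπ)x}` on `[0,1]` and
`e^{2iw} e^{-i(w+nπ)x}` on `(1,2]`. Both frequencies are nonzero since `w ∉ πℤ`, so each piece has
an elementary antiderivative. With `E = (-1)ⁿ e^{iw}` the two pieces equal `-i(E-1)/(w-nπ)` and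
`-i(E-1)/(w+nπ)`; half their sum is the claimed value.
-/

open Complex

/-- One period (on `[0,2]`) of the 2-periodic function `a_w`, equal to `e^{iwx}` on `[0,1]`
and to `e^{iw(2−x)}` on `(1,2)`. -/
noncomputable def aw (w : ℝ) (x : ℝ) : ℂ :=
  if x ≤ 1 then Complex.exp (I * (w : ℂ) * (x : ℂ))
  else Complex.exp (I * (w : ℂ) * ((2 : ℂ) - (x : ℂ)))

/-- The value of `e^{-inπx}` at the breakpoint `x = 1`. -/
lemma exp_neg_int_mul_pi (n : ℤ) :
    Complex.exp (-I * (n : ℂ) * (Real.pi : ℂ)) = (-1 : ℂ) ^ n := by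
  have h : -I * (n : ℂ) * (Real.pi : ℂ) = ((-n : ℤ) : ℂ) * ((Real.pi : ℂ) * I) := by
    push_cast; ring
  rw [h, Complex.exp_int_mul, Complex.exp_pi_mul_I, zpow_neg, ← inv_zpow]
  norm_num

/-- Fourier coefficients of the 2-periodic function `a_w`:
`(1/2)·∫₀² a_w(x)·e^{−inπx} dx = −i·w·((−1)ⁿ e^{iw} − 1)/(w² − (nπ)²)` for `w ∉ πℤ`. -/
theorem fourier_coeff_aw (w : ℝ) (hw : ∀ n : ℤ, w ≠ n * Real.pi) (n : ℤ) :
    (1/2 : ℂ) * ∫ x in (0:ℝ)..2, aw w x * Complex.exp (-I * (n : ℂ) * (Real.pi : ℂ) * (x : ℂ))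
      = -I * (w : ℂ) * ((-1 : ℂ) ^ n * Complex.exp (I * (w : ℂ)) - 1)
          / ((w : ℂ) ^ 2 - ((n : ℂ) * (Real.pi : ℂ)) ^ 2) := by
  -- `w ∉ πℤ` makes both frequencies `w - nπ` and `w + nπ` nonzero
  have hm : (w : ℂ) - n * Real.pi ≠ 0 := by
    intro h
    exact hw n (by exact_mod_cast sub_eq_zero.mp h)
  have hp : (w : ℂ) + n * Real.pi ≠ 0 := by
    intro h
    apply hw (-n)
    have h' : w + n * Real.pi = 0 := by exact_mod_cast h
    push_cast
    linarith
  have hcm : I * ((w : ℂ) - n * Real.pi) ≠ 0 := mul_ne_zero I_ne_zero hm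
  have hcp : -I * ((w : ℂ) + n * Real.pi) ≠ 0 := mul_ne_zero (neg_ne_zero.mpr I_ne_zero) hp
  have e1 : Set.EqOn (fun x : ℝ => Complex.exp (I * ((w : ℂ) - n * Real.pi) * x))
      (fun x : ℝ => aw w x * Complex.exp (-I * (n : ℂ) * (Real.pi : ℂ) * (x : ℂ)))
      (Set.uIoc 0 1) := by
    intro x hx
    rw [Set.uIoc_of_le zero_le_one] at hx
    simp only [aw, if_pos hx.2]
    rw [← Complex.exp_add]
    congr 1
    ring
  have e2 : Set.EqOn
      (fun x : ℝ => Complex.exp (2 * (I * w)) * Complex.exp (-I * ((w : ℂ) + n * Real.pi) * x))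
      (fun x : ℝ => aw w x * Complex.exp (-I * (n : ℂ) * (Real.pi : ℂ) * (x : ℂ)))
      (Set.uIoc 1 2) := by
    intro x hx
    rw [Set.uIoc_of_le one_le_two] at hx
    simp only [aw, if_neg (not_le.mpr hx.1)]
    rw [← Complex.exp_add, ← Complex.exp_add]
    congr 1
    ring
  have i1 : IntervalIntegrable (fun x : ℝ => Complex.exp (I * ((w : ℂ) - n * Real.pi) * x))
      MeasureTheory.volume 0 1 := Continuous.intervalIntegrable (by fun_prop) _ _
  have i2 : IntervalIntegrable
      (fun x : ℝ => Complex.exp (2 * (I * w)) * Complex.exp (-I * ((w : ℂ) + n * Real.pi) * x))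
      MeasureTheory.volume 1 2 := Continuous.intervalIntegrable (by fun_prop) _ _
  rw [← intervalIntegral.integral_add_adjacent_intervals (i1.congr e1) (i2.congr e2),
    ← intervalIntegral.integral_congr_ae (.of_forall e1),
    ← intervalIntegral.integral_congr_ae (.of_forall e2),
    intervalIntegral.integral_const_mul, integral_exp_mul_complex hcm,
    integral_exp_mul_complex hcp]
  have hs := exp_neg_int_mul_pi n
  have hs2 : ((-1 : ℂ) ^ n) * (-1 : ℂ) ^ n = 1 := by
    rw [← mul_zpow]; norm_num
  have v1 : Complex.exp (I * ((w : ℂ) - n * Real.pi) * (1 : ℝ))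
      = (-1 : ℂ) ^ n * Complex.exp (I * w) := by
    rw [← hs, ← Complex.exp_add]
    congr 1
    push_cast; ring
  have v2 : Complex.exp (2 * (I * w)) * Complex.exp (-I * ((w : ℂ) + n * Real.pi) * (2 : ℝ))
      = 1 := by
    rw [← hs2, ← hs, ← Complex.exp_add, ← Complex.exp_add]
    congr 1
    push_cast; ring
  have v3 : Complex.exp (2 * (I * w)) * Complex.exp (-I * ((w : ℂ) + n * Real.pi) * (1 : ℝ))
      = (-1 : ℂ) ^ n * Complex.exp (I * w) := by
    rw [← hs, ← Complex.exp_add, ← Complex.exp_add]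
    congr 1
    push_cast; ring
  have v0 : Complex.exp (I * ((w : ℂ) - n * Real.pi) * (0 : ℝ)) = 1 := by simp
  rw [← mul_div_assoc, mul_sub (Complex.exp _), v0, v1, v2, v3]
  generalize (-1 : ℂ) ^ n * Complex.exp (I * w) = E
  have hd : (w : ℂ) ^ 2 - (n * Real.pi) ^ 2 = (w - n * Real.pi) * (w + n * Real.pi) := by ring
  have a1 : (E - 1) / (I * ((w : ℂ) - n * Real.pi)) = -I * (E - 1) / (w - n * Real.pi) := by
    rw [div_eq_div_iff hcm hm]
    linear_combination (E - 1) * ((w : ℂ) - n * Real.pi) * I_mul_I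
  have a2 : (1 - E) / (-I * ((w : ℂ) + n * Real.pi)) = -I * (E - 1) / (w + n * Real.pi) := by
    rw [div_eq_div_iff hcp hp]
    linear_combination -(E - 1) * ((w : ℂ) + n * Real.pi) * I_mul_I
  rw [a1, a2, hd]
  field_simp
  ring
end

section
/- Let w ∈ ℝ with 0 < |w| ≤ π/2 and let N ≥ 1 be a natural number. Then ∑_{n=N+1}^{∞} |c_n(w)| ≤ (2/π)·1/(N − 1/4). -/
/-!
The numerator factor `(−1)ⁿ e^{iw} − 1` has modulus at most `2`, and `|w| ≤ π/2`, so for `n ≥ 1`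
`|c_n(w)| ≤ π / (π² (n² − 1/4)) = (1/π) (1/(n − 1/2) − 1/(n + 1/2))` (`cc_norm_le`).
The right-hand side telescopes: the tail from `N + 1` is at most `(1/π) / (N + 1/2)`, which is
smaller than `(2/π) / (N − 1/4)`.
-/

open Complex

/-- The Fourier coefficients `c_n(w) = −i·w·((−1)ⁿ e^{iw} − 1)/(w² − (nπ)²)` of the 2-periodic
function equal to `e^{iwx}` on `[0,1]` and to `e^{iw(2−x)}` on `(1,2)`. -/
noncomputable def cc (w : ℝ) (n : ℤ) : ℂ :=
  -I * (w : ℂ) * ((-1 : ℂ) ^ n * Complex.exp (I * (w : ℂ)) - 1)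
    / ((w : ℂ) ^ 2 - ((n : ℂ) * (Real.pi : ℂ)) ^ 2)

lemma cc_norm_le (w : ℝ) (hw : |w| ≤ Real.pi / 2) (n : ℤ) (hn : 1 ≤ n) :
    ‖cc w n‖ ≤ (1 / Real.pi) * (1 / ((n : ℝ) - 1 / 2) - 1 / ((n : ℝ) + 1 / 2)) := by
  have hpi := Real.pi_pos
  have hn' : (1 : ℝ) ≤ n := by exact_mod_cast hn
  have hnum : ‖(-1 : ℂ) ^ n * Complex.exp (I * (w : ℂ)) - 1‖ ≤ 2 := by
    refine (norm_sub_le _ _).trans ?_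
    rw [norm_mul, norm_zpow, mul_comm I, Complex.norm_exp_ofReal_mul_I]
    norm_num
  have hsq : w ^ 2 ≤ Real.pi ^ 2 / 4 := by
    have := pow_le_pow_left₀ (abs_nonneg w) hw 2
    rw [sq_abs] at this
    linarith
  have hpos : 0 < Real.pi ^ 2 * ((n : ℝ) ^ 2 - 1 / 4) :=
    mul_pos (by positivity) (by nlinarith)
  have hden : Real.pi ^ 2 * ((n : ℝ) ^ 2 - 1 / 4) ≤
      ‖(w : ℂ) ^ 2 - ((n : ℂ) * (Real.pi : ℂ)) ^ 2‖ := by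
    have hcast : (w : ℂ) ^ 2 - ((n : ℂ) * (Real.pi : ℂ)) ^ 2 =
        ((w ^ 2 - ((n : ℝ) * Real.pi) ^ 2 : ℝ) : ℂ) := by push_cast; rfl
    rw [hcast, Complex.norm_real, Real.norm_eq_abs, abs_sub_comm]
    refine le_trans ?_ (le_abs_self _)
    nlinarith
  have hrhs : (1 / Real.pi) * (1 / ((n : ℝ) - 1 / 2) - 1 / ((n : ℝ) + 1 / 2)) =
      Real.pi / 2 * 2 / (Real.pi ^ 2 * ((n : ℝ) ^ 2 - 1 / 4)) := by
    have h1 : (n : ℝ) - 1 / 2 ≠ 0 := by linarith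
    have h2 : (n : ℝ) + 1 / 2 ≠ 0 := by linarith
    have h3 : (n : ℝ) ^ 2 - 1 / 4 = ((n : ℝ) - 1 / 2) * ((n : ℝ) + 1 / 2) := by ring
    rw [h3, div_sub_div _ _ h1 h2, div_mul_div_comm, div_eq_div_iff (by positivity) (by positivity)]
    ring
  rw [hrhs, cc, norm_div, norm_mul, norm_mul, norm_neg, Complex.norm_I, one_mul,
    Complex.norm_real, Real.norm_eq_abs]
  gcongr

/-- Tail bound: for `0 < |w| ≤ π/2` and `N ≥ 1`,
`∑_{n=N+1}^{∞} |c_n(w)| ≤ (2/π)·1/(N − 1/4)`. -/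
theorem cc_tail_bound (w : ℝ) (hw0 : 0 < |w|) (hw : |w| ≤ Real.pi / 2)
    (N : ℕ) (hN : 1 ≤ N) :
    ∑' k : ℕ, ‖cc w ((N : ℤ) + 1 + (k : ℤ))‖ ≤ (2 / Real.pi) * (1 / ((N : ℝ) - 1/4)) := by
  have hpi := Real.pi_pos
  have hN' : (1 : ℝ) ≤ N := by exact_mod_cast hN
  refine Real.tsum_le_of_sum_range_le (fun _ => norm_nonneg _) fun K => ?_
  have hpartial : ∑ k ∈ Finset.range K, ‖cc w ((N : ℤ) + 1 + (k : ℤ))‖ ≤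
      (1 / Real.pi) * (1 / ((N : ℝ) + 1 / 2) - 1 / ((N : ℝ) + K + 1 / 2)) := by
    induction K with
    | zero => simp
    | succ K ih =>
      rw [Finset.sum_range_succ]
      have h := cc_norm_le w hw ((N : ℤ) + 1 + (K : ℤ)) (by omega)
      push_cast at h ⊢
      rw [show (N : ℝ) + 1 + K - 1 / 2 = N + K + 1 / 2 by ring,
        show (N : ℝ) + 1 + K + 1 / 2 = N + (K + 1) + 1 / 2 by ring] at h
      linarith
  refine hpartial.trans ?_
  have hlast : 0 ≤ 1 / ((N : ℝ) + K + 1 / 2) := by positivity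
  have hcmp : 1 / ((N : ℝ) + 1 / 2) ≤ 1 / ((N : ℝ) - 1 / 4) :=
    one_div_le_one_div_of_le (by linarith) (by linarith)
  have hfirst : 0 ≤ 1 / ((N : ℝ) + 1 / 2) := by positivity
  calc (1 / Real.pi) * (1 / ((N : ℝ) + 1 / 2) - 1 / ((N : ℝ) + K + 1 / 2))
      ≤ (1 / Real.pi) * (1 / ((N : ℝ) - 1 / 4)) := by gcongr; linarith
    _ ≤ (2 / Real.pi) * (1 / ((N : ℝ) - 1 / 4)) := by
        have : 0 ≤ 1 / ((N : ℝ) - 1 / 4) := hfirst.trans hcmp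
        gcongr
        norm_num
end

section
/- Let w ∈ ℝ with 0 < |w| ≤ π/2 and let N ≥ 1 be a natural number. Then ∑_{n=1}^{N} n·|c_n(w)| ≤ (2/π)·(4/3 + (1/2)·log((4N² − 1)/3)). -/
/-!
For `|w| ≤ π/2` the numerator of `c_n(w)` has modulus at most `2|w| ≤ π`, and the denominator
has modulus `n²π² − w² ≥ π²(4n² − 1)/4`, so `n·|c_n(w)| ≤ (2/π)·2n/(4n² − 1)`
(`mul_norm_cc_le`). For `n ≥ 2` the inequality `1 − 1/x ≤ log x` at
`x = (4n² − 1)/(4(n−1)² − 1)` gives `2n/(4n² − 1) ≤ (4n − 2)/(4n² − 1) ≤ (1/2)·log x`, and these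
logarithms telescope.
-/

open Complex

lemma mul_norm_cc_le (w : ℝ) (hw : |w| ≤ Real.pi / 2) (n : ℕ) (hn : 1 ≤ n) :
    (n : ℝ) * ‖cc w (n : ℤ)‖ ≤ (2 / Real.pi) * (2 * n / (4 * (n : ℝ) ^ 2 - 1)) := by
  have hpi := Real.pi_pos
  have hn' : (1 : ℝ) ≤ n := by exact_mod_cast hn
  have hD : (0 : ℝ) < 4 * (n : ℝ) ^ 2 - 1 := by nlinarith
  have hw2 : w ^ 2 ≤ (Real.pi / 2) ^ 2 := sq_le_sq' (by linarith [neg_abs_le w])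
    (le_trans (le_abs_self w) hw)
  have hden : Real.pi ^ 2 * (4 * (n : ℝ) ^ 2 - 1) / 4
      ≤ ‖(w : ℂ) ^ 2 - (((n : ℤ) : ℂ) * (Real.pi : ℂ)) ^ 2‖ := by
    have h : (w : ℂ) ^ 2 - (((n : ℤ) : ℂ) * (Real.pi : ℂ)) ^ 2
        = ((w ^ 2 - (n * Real.pi) ^ 2 : ℝ) : ℂ) := by push_cast; ring
    rw [h, Complex.norm_real, Real.norm_eq_abs]
    refine le_trans ?_ (neg_le_abs _)
    nlinarith
  have hnum : ‖-I * (w : ℂ) * ((-1 : ℂ) ^ (n : ℤ) * Complex.exp (I * (w : ℂ)) - 1)‖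
      ≤ Real.pi := by
    have h1 : ‖(-1 : ℂ) ^ (n : ℤ) * Complex.exp (I * (w : ℂ)) - 1‖ ≤ 2 := by
      refine (norm_sub_le _ _).trans ?_
      rw [norm_mul, mul_comm I, Complex.norm_exp_ofReal_mul_I]
      simp
      norm_num
    rw [norm_mul, norm_mul, norm_neg, Complex.norm_I, Complex.norm_real, Real.norm_eq_abs, one_mul]
    calc _ ≤ Real.pi / 2 * 2 := by gcongr
      _ = Real.pi := by ring
  unfold cc
  rw [norm_div]
  calc _ ≤ (n : ℝ) * (Real.pi / (Real.pi ^ 2 * (4 * (n : ℝ) ^ 2 - 1) / 4)) := by gcongr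
    _ = _ := by field_simp; ring

lemma two_mul_div_le_log (n : ℕ) (hn : 1 ≤ n) :
    2 * ((n + 1 : ℕ) : ℝ) / (4 * ((n + 1 : ℕ) : ℝ) ^ 2 - 1)
      ≤ (1/2) * Real.log ((4 * ((n + 1 : ℕ) : ℝ) ^ 2 - 1) / 3)
        - (1/2) * Real.log ((4 * (n : ℝ) ^ 2 - 1) / 3) := by
  have hn' : (1 : ℝ) ≤ n := by exact_mod_cast hn
  push_cast
  have hA : (0 : ℝ) < 4 * (n : ℝ) ^ 2 - 1 := by nlinarith
  have hB : (0 : ℝ) < 4 * ((n : ℝ) + 1) ^ 2 - 1 := by nlinarith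
  have h := Real.one_sub_inv_le_log_of_pos (div_pos hB hA)
  rw [inv_div, Real.log_div hB.ne' hA.ne'] at h
  rw [Real.log_div hB.ne' (by norm_num), Real.log_div hA.ne' (by norm_num)]
  have h2 : 2 * ((n : ℝ) + 1) / (4 * ((n : ℝ) + 1) ^ 2 - 1)
      ≤ (1/2) * (1 - (4 * (n : ℝ) ^ 2 - 1) / (4 * ((n : ℝ) + 1) ^ 2 - 1)) := by
    rw [one_sub_div hB.ne', ← mul_div_assoc]
    exact div_le_div_of_nonneg_right (by nlinarith) hB.le
  linarith

/-- Weighted partial-sum bound: for `0 < |w| ≤ π/2` and `N ≥ 1`,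
`∑_{n=1}^{N} n·|c_n(w)| ≤ (2/π)·(4/3 + (1/2)·log((4N² − 1)/3))`. -/
theorem cc_weighted_sum_bound (w : ℝ) (hw0 : 0 < |w|) (hw : |w| ≤ Real.pi / 2)
    (N : ℕ) (hN : 1 ≤ N) :
    ∑ n ∈ Finset.Icc 1 N, (n : ℝ) * ‖cc w (n : ℤ)‖
      ≤ (2 / Real.pi) * (4/3 + (1/2) * Real.log ((4 * (N : ℝ) ^ 2 - 1) / 3)) := by
  have hpi := Real.pi_pos
  clear hw0
  induction N, hN using Nat.le_induction with
  | base =>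
    have h := mul_norm_cc_le w hw 1 le_rfl
    have h3 : (4 * ((1 : ℕ) : ℝ) ^ 2 - 1) / 3 = 1 := by norm_num
    rw [Finset.Icc_self, Finset.sum_singleton, h3, Real.log_one]
    refine h.trans ?_
    gcongr
    norm_num
  | succ n hn ih =>
    rw [Finset.sum_Icc_succ_top (by omega)]
    have h1 := mul_norm_cc_le w hw (n + 1) (by omega)
    have h2 := mul_le_mul_of_nonneg_left (two_mul_div_le_log n hn)
      (show 0 ≤ 2 / Real.pi by positivity)
    linarith
end

section
/- Let w ∈ ℝ with 0 < |w| ≤ π/2 and let N ≥ 1 be a natural number. Then sup_{x ∈ [0,1]} |P_{N,w}(x) − e^{iwx}| ≤ (2/(N+1))·∑_{n=1}^{N} n·|c_n(w)| + 2·∑_{n=N+1}^{∞} |c_n(w)|. -/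
/-!
The function `x ↦ e^{iw|x|}` takes equal values at `±1`, so it defines a continuous function on the
circle `ℝ/2ℤ`; its Fourier coefficients are the `cc w n` (`fourierCoeff_wave`). These are
`O(1/n²)`, so the Fourier series converges absolutely to `e^{iwx}` on `[0,1]`
(`hasSum_cc_mul_exp`). Subtracting the Cesàro mean, the `n`-th Fourier mode of the error is
`cc w n` times a factor of modulus `|n|/(N+1)` for `|n| ≤ N` and `1` for `|n| > N`. The triangle
inequality together with `cc w (-n) = cc w n` gives the bound.
-/

open Complex

/-- The `N`-th Cesàro mean `P_{N,w}(x) = ∑_{n=−N}^{N} ((N+1−|n|)/(N+1))·c_n(w)·e^{inπx}`. -/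
noncomputable def cesaro (N : ℕ) (w : ℝ) (x : ℝ) : ℂ :=
  ∑ n ∈ Finset.Icc (-(N : ℤ)) (N : ℤ),
    ((((N : ℝ) + 1 - |(n : ℝ)|) / ((N : ℝ) + 1) : ℝ) : ℂ) * cc w n *
      Complex.exp (I * (n : ℂ) * (Real.pi : ℂ) * (x : ℂ))

lemma sub_mul_pi_ne_zero {w : ℝ} (hw0 : 0 < |w|) (hw : |w| ≤ Real.pi / 2) (n : ℤ) :
    w - n * Real.pi ≠ 0 := by
  intro h
  have hpi := Real.pi_pos
  have h1 : w = n * Real.pi := by linarith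
  rw [h1, abs_mul, abs_of_pos hpi] at hw hw0
  rcases eq_or_ne n 0 with rfl | hn
  · simp at hw0
  · have : (1 : ℝ) ≤ |(n : ℝ)| := by exact_mod_cast Int.one_le_abs hn
    nlinarith

lemma cc_neg (w : ℝ) (n : ℤ) : cc w (-n) = cc w n := by
  have : ((-1 : ℂ)) ^ (-n) = (-1) ^ n := by
    rw [zpow_neg, ← inv_zpow]; norm_num
  simp [cc, this]

/-- Decay of the coefficients: the numerator is at most `2|w| ≤ π`, and since `|w| ≤ π/2` and
`π > 3` the denominator is at least `π n²`. -/
lemma norm_cc_le {w : ℝ} (hw : |w| ≤ Real.pi / 2) {n : ℤ} (hn : n ≠ 0) :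
    ‖cc w n‖ ≤ 1 / (n : ℝ) ^ 2 := by
  have hpi := Real.pi_gt_three
  have hn1 : (1 : ℝ) ≤ (n : ℝ) ^ 2 := by
    have : (1 : ℤ) ≤ n ^ 2 := by have := Int.one_le_abs hn; nlinarith [sq_abs n]
    exact_mod_cast this
  have hw2 : w ^ 2 ≤ Real.pi ^ 2 / 4 := by
    nlinarith [sq_abs w, abs_nonneg w]
  have hnum : ‖-I * (w : ℂ) * ((-1 : ℂ) ^ n * Complex.exp (I * (w : ℂ)) - 1)‖ ≤ Real.pi := by
    have h2 : ‖(-1 : ℂ) ^ n * Complex.exp (I * (w : ℂ)) - 1‖ ≤ 2 := by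
      refine (norm_sub_le _ _).trans ?_
      rw [norm_mul, norm_zpow, mul_comm I, Complex.norm_exp_ofReal_mul_I]
      norm_num
    rw [norm_mul, norm_mul, norm_neg, norm_I, one_mul, norm_real, Real.norm_eq_abs]
    nlinarith [norm_nonneg ((-1 : ℂ) ^ n * Complex.exp (I * (w : ℂ)) - 1), abs_nonneg w]
  have hden : Real.pi * (n : ℝ) ^ 2 ≤ ‖(w : ℂ) ^ 2 - ((n : ℂ) * (Real.pi : ℂ)) ^ 2‖ := by
    have : (w : ℂ) ^ 2 - ((n : ℂ) * (Real.pi : ℂ)) ^ 2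
        = ((w ^ 2 - (n * Real.pi) ^ 2 : ℝ) : ℂ) := by push_cast; ring
    rw [this, norm_real, Real.norm_eq_abs, abs_sub_comm]
    refine le_trans ?_ (le_abs_self _)
    have h3 : Real.pi ^ 2 ≤ Real.pi ^ 2 * (n : ℝ) ^ 2 := by nlinarith [sq_nonneg Real.pi]
    have h4 : 3 * Real.pi * (n : ℝ) ^ 2 ≤ Real.pi ^ 2 * (n : ℝ) ^ 2 := by
      apply mul_le_mul_of_nonneg_right _ (by positivity)
      nlinarith
    have h5 : 0 ≤ Real.pi * (n : ℝ) ^ 2 := by positivity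
    nlinarith
  rw [cc, norm_div]
  calc _ ≤ Real.pi / (Real.pi * (n : ℝ) ^ 2) := by gcongr
    _ = _ := by field_simp

lemma summable_norm_cc {w : ℝ} (hw : |w| ≤ Real.pi / 2) : Summable fun n : ℤ => ‖cc w n‖ := by
  refine (Real.summable_one_div_int_pow.mpr one_lt_two).of_norm_bounded_eventually ?_
  have : ∀ᶠ n : ℤ in Filter.cofinite, n ≠ 0 :=
    (Set.finite_singleton (0 : ℤ)).compl_mem_cofinite
  filter_upwards [this] with n hn
  simpa using norm_cc_le hw hn

/-- The `2`-periodic extension of `x ↦ e^{iw|x|}`, `x ∈ [-1,1]`; on `[0,1]` it is `e^{iwx}`, and on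
`(1,2)` it is `e^{iw(2-x)}`. -/
noncomputable def wave (w : ℝ) : C(AddCircle (2 : ℝ), ℂ) where
  toFun := haveI : Fact ((0 : ℝ) < 2) := ⟨two_pos⟩
    AddCircle.liftIoc 2 (-1) fun x : ℝ => Complex.exp (I * w * |x|)
  continuous_toFun := by
    have : Fact ((0 : ℝ) < 2) := ⟨two_pos⟩
    apply AddCircle.liftIoc_continuous
    · norm_num
    · fun_prop

lemma wave_coe (w : ℝ) {x : ℝ} (hx : x ∈ Set.Ioc (-1 : ℝ) 1) :
    wave w (x : AddCircle (2 : ℝ)) = Complex.exp (I * w * |x|) := by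
  have : Fact ((0 : ℝ) < 2) := ⟨two_pos⟩
  change AddCircle.liftIoc 2 (-1) (fun x : ℝ => Complex.exp (I * w * |x|)) x = _
  rw [AddCircle.liftIoc_coe_apply]
  rwa [show (-1 : ℝ) + 2 = 1 by norm_num]

lemma exp_int_mul_pi_mul_I (n : ℤ) : Complex.exp (n * Real.pi * I) = (-1) ^ n := by
  rw [mul_assoc, Complex.exp_int_mul, Complex.exp_pi_mul_I]

/-- The integral over `[-1,1]` splits at `0` into integrals of the exponentials
`e^{Ax}` and `e^{Bx}`, whose frequencies are nonzero because `w ± nπ ≠ 0`. -/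
lemma fourierCoeff_wave {w : ℝ} (hw0 : 0 < |w|) (hw : |w| ≤ Real.pi / 2) (n : ℤ) :
    haveI : Fact ((0 : ℝ) < 2) := ⟨two_pos⟩
    fourierCoeff (wave w) n = cc w n := by
  have : Fact ((0 : ℝ) < 2) := ⟨two_pos⟩
  have hm : (w : ℂ) - n * Real.pi ≠ 0 := by exact_mod_cast sub_mul_pi_ne_zero hw0 hw n
  have hp : (w : ℂ) + n * Real.pi ≠ 0 := by
    have := sub_mul_pi_ne_zero hw0 hw (-n)
    push_cast at this
    rw [neg_mul, sub_neg_eq_add] at this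
    exact_mod_cast this
  set A : ℂ := I * (w - n * Real.pi) with hA
  set B : ℂ := -(I * (w + n * Real.pi)) with hB
  have hA0 : A ≠ 0 := mul_ne_zero I_ne_zero hm
  have hB0 : B ≠ 0 := neg_ne_zero.mpr (mul_ne_zero I_ne_zero hp)
  have hint : ∀ a b : ℝ, IntervalIntegrable
      (fun x : ℝ => Complex.exp (-(n * Real.pi * I * x)) * Complex.exp (I * w * |x|))
      MeasureTheory.volume a b :=
    fun a b => Continuous.intervalIntegrable (by fun_prop) a b
  have hexpA : Complex.exp A = (-1) ^ n * Complex.exp (I * w) := by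
    rw [hA, show I * ((w : ℂ) - n * Real.pi) = ((-n : ℤ) : ℂ) * Real.pi * I + I * w by
      push_cast; ring, Complex.exp_add, exp_int_mul_pi_mul_I, zpow_neg, ← inv_zpow]
    norm_num
  have hexpB : Complex.exp (-B) = (-1) ^ n * Complex.exp (I * w) := by
    rw [hB, show -(-(I * ((w : ℂ) + n * Real.pi))) = (n : ℂ) * Real.pi * I + I * w by ring,
      Complex.exp_add, exp_int_mul_pi_mul_I]
  have hpos : ∫ x in (0 : ℝ)..1, Complex.exp (-(n * Real.pi * I * x)) * Complex.exp (I * w * |x|)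
      = (Complex.exp A - 1) / A := by
    have : ∫ x in (0 : ℝ)..1, Complex.exp (-(n * Real.pi * I * x)) * Complex.exp (I * w * |x|)
        = ∫ x in (0 : ℝ)..1, Complex.exp (A * x) := by
      refine intervalIntegral.integral_congr fun x hx => ?_
      rw [Set.uIcc_of_le zero_le_one] at hx
      rw [abs_of_nonneg hx.1, ← Complex.exp_add]
      congr 1
      rw [hA]; ring
    rw [this, integral_exp_mul_complex hA0]
    simp
  have hneg : ∫ x in (-1 : ℝ)..0,
      Complex.exp (-(n * Real.pi * I * x)) * Complex.exp (I * w * |x|)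
      = (1 - Complex.exp (-B)) / B := by
    have : ∫ x in (-1 : ℝ)..0,
        Complex.exp (-(n * Real.pi * I * x)) * Complex.exp (I * w * |x|)
        = ∫ x in (-1 : ℝ)..0, Complex.exp (B * x) := by
      refine intervalIntegral.integral_congr fun x hx => ?_
      rw [Set.uIcc_of_le (by norm_num)] at hx
      rw [abs_of_nonpos hx.2, ← Complex.exp_add]
      congr 1
      rw [hB]; push_cast; ring
    rw [this, integral_exp_mul_complex hB0]
    simp
  have hmain : ∫ x in (-1 : ℝ)..1, fourier (-n) (x : AddCircle (2 : ℝ)) • wave w x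
      = (1 - Complex.exp (-B)) / B + (Complex.exp A - 1) / A := by
    rw [← hpos, ← hneg, intervalIntegral.integral_add_adjacent_intervals (hint _ _) (hint _ _)]
    refine intervalIntegral.integral_congr_ae (Filter.Eventually.of_forall fun x hx => ?_)
    rw [Set.uIoc_of_le (by norm_num)] at hx
    rw [wave_coe w hx, fourier_coe_apply, smul_eq_mul]
    congr 2
    push_cast; ring
  rw [fourierCoeff_eq_intervalIntegral _ _ (-1), show (-1 : ℝ) + 2 = 1 by norm_num, hmain, hexpA,
    hexpB, cc, hA, hB]
  have hd : (w : ℂ) ^ 2 - ((n : ℂ) * (Real.pi : ℂ)) ^ 2 ≠ 0 := by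
    rw [sq_sub_sq]; exact mul_ne_zero hp hm
  generalize (-1 : ℂ) ^ n * Complex.exp (I * w) = E
  rw [show (w : ℂ) ^ 2 - ((n : ℂ) * (Real.pi : ℂ)) ^ 2
    = (w + n * Real.pi) * (w - n * Real.pi) by ring, real_smul]
  push_cast
  generalize hP : (w : ℂ) + n * Real.pi = P at *
  generalize hM : (w : ℂ) - n * Real.pi = M at *
  have hsum : (w : ℂ) = (P + M) / 2 := by rw [← hP, ← hM]; ring
  rw [hsum]
  field_simp
  rw [I_sq]
  ring

lemma hasSum_cc_mul_exp {w : ℝ} (hw0 : 0 < |w|) (hw : |w| ≤ Real.pi / 2) {x : ℝ}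
    (hx : x ∈ Set.Icc (0 : ℝ) 1) :
    HasSum (fun n : ℤ => cc w n * Complex.exp (I * (n : ℂ) * (Real.pi : ℂ) * (x : ℂ)))
      (Complex.exp (I * w * x)) := by
  have : Fact ((0 : ℝ) < 2) := ⟨two_pos⟩
  have hco : fourierCoeff (wave w) = cc w := funext (fourierCoeff_wave hw0 hw)
  have h := has_pointwise_sum_fourier_series_of_summable (f := wave w)
    (by rw [hco]; exact (summable_norm_cc hw).of_norm) (x : AddCircle (2 : ℝ))
  rw [wave_coe w ⟨by linarith [hx.1], hx.2⟩, abs_of_nonneg hx.1, hco] at h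
  convert h using 2 with n
  rw [fourier_coe_apply, smul_eq_mul]
  congr 2
  push_cast; ring

/-- The modulus `min(|n|, N+1)/(N+1)` of the factor by which the `N`-th Cesàro mean distorts the
`n`-th Fourier mode. -/
noncomputable def damp (N : ℕ) (n : ℤ) : ℝ :=
  if |n| ≤ (N : ℤ) then |(n : ℝ)| / ((N : ℝ) + 1) else 1

lemma damp_nonneg (N : ℕ) (n : ℤ) : 0 ≤ damp N n := by
  unfold damp; split_ifs <;> positivity

lemma damp_le_one (N : ℕ) (n : ℤ) : damp N n ≤ 1 := by
  unfold damp
  split_ifs with h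
  · have : |(n : ℝ)| ≤ N := by exact_mod_cast h
    rw [div_le_one (by positivity)]; linarith
  · rfl

/-- Absolutely convergent Fourier expansion of the error of the Cesàro mean on `[0,1]`. -/
lemma cesaro_sub_exp_hasSum {w : ℝ} (hw0 : 0 < |w|) (hw : |w| ≤ Real.pi / 2) (N : ℕ) {x : ℝ}
    (hx : x ∈ Set.Icc (0 : ℝ) 1) :
    HasSum (fun n : ℤ => -((damp N n : ℝ) : ℂ) *
      (cc w n * Complex.exp (I * (n : ℂ) * (Real.pi : ℂ) * (x : ℂ))))
      (cesaro N w x - Complex.exp (I * w * x)) := by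
  have h1 : HasSum (fun n : ℤ => ((1 - damp N n : ℝ) : ℂ) *
      (cc w n * Complex.exp (I * (n : ℂ) * (Real.pi : ℂ) * (x : ℂ)))) (cesaro N w x) := by
    have hc : cesaro N w x = ∑ n ∈ Finset.Icc (-(N : ℤ)) (N : ℤ), ((1 - damp N n : ℝ) : ℂ) *
        (cc w n * Complex.exp (I * (n : ℂ) * (Real.pi : ℂ) * (x : ℂ))) := by
      refine Finset.sum_congr rfl fun n hn => ?_
      have hn' : |n| ≤ (N : ℤ) := abs_le.mpr (Finset.mem_Icc.mp hn)
      have : ((N : ℝ) + 1 - |(n : ℝ)|) / ((N : ℝ) + 1) = 1 - damp N n := by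
        rw [damp, if_pos hn']; field_simp
      rw [this, mul_assoc]
    rw [hc]
    refine hasSum_sum_of_ne_finset_zero fun n hn => ?_
    have hn' : ¬ |n| ≤ (N : ℤ) := fun h => hn (Finset.mem_Icc.mpr (abs_le.mp h))
    simp [damp, hn']
  have h2 := h1.sub (hasSum_cc_mul_exp hw0 hw hx)
  have hfun : (fun n : ℤ => -((damp N n : ℝ) : ℂ) *
      (cc w n * Complex.exp (I * (n : ℂ) * (Real.pi : ℂ) * (x : ℂ))))
      = fun n : ℤ => ((1 - damp N n : ℝ) : ℂ) *
        (cc w n * Complex.exp (I * (n : ℂ) * (Real.pi : ℂ) * (x : ℂ)))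
        - cc w n * Complex.exp (I * (n : ℂ) * (Real.pi : ℂ) * (x : ℂ)) := by
    funext n
    push_cast; ring
  rw [hfun]
  exact h2

/-- Error of the Cesàro mean on `[0,1]`:
`sup_{x∈[0,1]} |P_{N,w}(x) − e^{iwx}| ≤ (2/(N+1))·∑_{n=1}^{N} n|c_n(w)| + 2·∑_{n=N+1}^{∞} |c_n(w)|`. -/
theorem cesaro_error_bound (w : ℝ) (hw0 : 0 < |w|) (hw : |w| ≤ Real.pi / 2)
    (N : ℕ) (hN : 1 ≤ N) :
    ∀ x ∈ Set.Icc (0:ℝ) 1,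
      ‖cesaro N w x - Complex.exp (I * (w : ℂ) * (x : ℂ))‖
        ≤ (2 / ((N : ℝ) + 1)) * ∑ n ∈ Finset.Icc 1 N, (n : ℝ) * ‖cc w (n : ℤ)‖
            + 2 * ∑' k : ℕ, ‖cc w ((N : ℤ) + 1 + (k : ℤ))‖ := by
  intro x hx
  set g : ℤ → ℝ := fun n => damp N n * ‖cc w n‖ with hg
  have hgs : Summable g := (summable_norm_cc hw).of_nonneg_of_le
    (fun n => mul_nonneg (damp_nonneg N n) (norm_nonneg _))
    (fun n => mul_le_of_le_one_left (norm_nonneg _) (damp_le_one N n))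
  have hbound : ‖cesaro N w x - Complex.exp (I * (w : ℂ) * (x : ℂ))‖ ≤ ∑' n, g n := by
    have hs := cesaro_sub_exp_hasSum hw0 hw N hx
    rw [← hs.tsum_eq]
    refine tsum_of_norm_bounded hgs.hasSum fun n => ?_
    have he : ‖Complex.exp (I * (n : ℂ) * (Real.pi : ℂ) * (x : ℂ))‖ = 1 := by
      rw [show I * (n : ℂ) * (Real.pi : ℂ) * (x : ℂ) = ((n * Real.pi * x : ℝ) : ℂ) * I by
        push_cast; ring, Complex.norm_exp_ofReal_mul_I]
    rw [norm_mul, norm_mul, he, norm_neg, norm_real, Real.norm_of_nonneg (damp_nonneg N n), mul_one]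
  have heven : g.Even := fun n => by simp [hg, damp, cc_neg]
  have hg0 : g 0 = 0 := by simp [hg, damp]
  have hnat : Summable fun k : ℕ => g (k + 1) := by
    have h1 : Summable fun k : ℕ => g k := hgs.comp_injective Nat.cast_injective
    exact_mod_cast (summable_nat_add_iff 1).mpr h1
  have hsplit : ∑' n, g n = 2 * (∑ k ∈ Finset.range N, g (k + 1) + ∑' k : ℕ, g (k + N + 1)) := by
    rw [tsum_int_eq_zero_add_two_mul_tsum_pnat heven hgs, hg0, zero_add,
      tsum_pnat_eq_tsum_succ (f := fun n : ℕ => g n), nsmul_eq_mul]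
    congr 1
    push_cast
    rw [← hnat.sum_add_tsum_nat_add N]
    push_cast
    rfl
  have hhead : ∑ k ∈ Finset.range N, g (k + 1)
      = (1 / ((N : ℝ) + 1)) * ∑ n ∈ Finset.Icc 1 N, (n : ℝ) * ‖cc w (n : ℤ)‖ := by
    have h := Finset.sum_Ico_add' (fun n : ℕ => g n) 0 N 1
    push_cast at h
    rw [Finset.mul_sum, Finset.range_eq_Ico, h]
    refine Finset.sum_congr (by ext; simp) fun n hn => ?_
    have hn' : |(n : ℤ)| ≤ (N : ℤ) := by
      rw [Nat.abs_cast]; exact_mod_cast (Finset.mem_Icc.mp hn).2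
    simp only [hg, damp, if_pos hn']
    simp only [Int.cast_natCast, Nat.abs_cast]
    ring
  have htail : ∑' k : ℕ, g (k + N + 1) = ∑' k : ℕ, ‖cc w ((N : ℤ) + 1 + (k : ℤ))‖ := by
    refine tsum_congr fun k => ?_
    have h : ¬ |(k : ℤ) + N + 1| ≤ (N : ℤ) := by
      rw [abs_of_nonneg (by positivity)]; omega
    simp only [hg, damp, if_neg h, one_mul]
    congr 2; ring
  rw [hsplit, hhead, htail] at hbound
  refine hbound.trans (le_of_eq ?_)
  ring
end

section
/- Let P, Q, z ∈ ℂ with |P|² + |Q|² = 1 and |z| = 1, and set M = [[P, −conj(Q)], [Q, conj(P)]] and D = [[z, 0], [0, conj(z)]]. Then ‖M − D‖_F = √2·√(|z − P|² + |Q|²), and moreover ‖M − D‖_F ≤ √2·√(|z − P|² + 2|z − P|); in particular, if |z − P| ≤ 1 then ‖M − D‖_F ≤ √(6·|z − P|). -/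
/-!
The entries of `M - D` are `P - z`, `-Q̄`, `Q` and the conjugate of `P - z`, so the squared Frobenius
norm is `2 (|z - P|² + |Q|²)`. Since `|z| = 1`, the reverse triangle inequality gives
`|Q|² = 1 - |P|² ≤ 2 (1 - |P|) ≤ 2 |z - P|`, which yields the first bound; the second follows
from `|z - P|² ≤ |z - P|` when `|z - P| ≤ 1`.
-/

open Complex Matrix

/-- Frobenius norm `‖A‖_F = √(Tr(AᴴA)) = √(∑ |A i j|²)`. -/
noncomputable def frobNorm {n : Type*} [Fintype n] (A : Matrix n n ℂ) : ℝ :=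
  Real.sqrt (∑ i, ∑ j, ‖A i j‖ ^ 2)

/-- Frobenius-norm distance between a unitary `[[P, −Q̄],[Q, P̄]]` (with `|P|²+|Q|²=1`) and the
diagonal unitary `[[z,0],[0,z̄]]` (with `|z|=1`): exact value, upper bound, and the simplified
bound `√(6|z−P|)` when `|z−P| ≤ 1`. -/
theorem frob_dist_unitary (P Q z : ℂ) (h : ‖P‖ ^ 2 + ‖Q‖ ^ 2 = 1) (hz : ‖z‖ = 1) :
    frobNorm (!![P, -(starRingEnd ℂ) Q; Q, (starRingEnd ℂ) P] - !![z, 0; 0, (starRingEnd ℂ) z])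
        = Real.sqrt 2 * Real.sqrt (‖z - P‖ ^ 2 + ‖Q‖ ^ 2) ∧
    frobNorm (!![P, -(starRingEnd ℂ) Q; Q, (starRingEnd ℂ) P] - !![z, 0; 0, (starRingEnd ℂ) z])
        ≤ Real.sqrt 2 * Real.sqrt (‖z - P‖ ^ 2 + 2 * ‖z - P‖) ∧
    (‖z - P‖ ≤ 1 →
      frobNorm (!![P, -(starRingEnd ℂ) Q; Q, (starRingEnd ℂ) P] - !![z, 0; 0, (starRingEnd ℂ) z])
        ≤ Real.sqrt (6 * ‖z - P‖)) := by
  have hexact : frobNorm (!![P, -(starRingEnd ℂ) Q; Q, (starRingEnd ℂ) P] -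
      !![z, 0; 0, (starRingEnd ℂ) z]) = Real.sqrt 2 * Real.sqrt (‖z - P‖ ^ 2 + ‖Q‖ ^ 2) := by
    have hconj : ‖(starRingEnd ℂ) P - (starRingEnd ℂ) z‖ = ‖z - P‖ := by
      rw [← map_sub, Complex.norm_conj, norm_sub_rev]
    rw [frobNorm, ← Real.sqrt_mul (by norm_num)]
    congr 1
    simp [Fin.sum_univ_two, hconj, norm_sub_rev P z]
    ring
  -- `|Q|² = (1 - |P|)(1 + |P|) ≤ 2 (1 - |P|)` and `1 - |P| = |z| - |P| ≤ |z - P|`.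
  have hQ : ‖Q‖ ^ 2 ≤ 2 * ‖z - P‖ := by
    have htri : ‖z‖ - ‖P‖ ≤ ‖z - P‖ := norm_sub_norm_le z P
    rw [hz] at htri
    nlinarith [sq_nonneg (1 - ‖P‖)]
  rw [hexact]
  refine ⟨rfl, by gcongr, fun hle => ?_⟩
  rw [← Real.sqrt_mul (by norm_num)]
  apply Real.sqrt_le_sqrt
  nlinarith [norm_nonneg (z - P)]
end

section
/- For every m ≥ 1, L ∈ ℕ, coefficients γ ∈ ℂ^L, weights W ∈ ℝ^{L×m} with entries w_{j,k}, and every ε > 0, there exist N ∈ ℕ and complex coefficients c_{j,k,n} (for 1 ≤ j ≤ L, 1 ≤ k ≤ m, −N ≤ n ≤ N) such that, setting P_{j,k}(t) = ∑_{n=−N}^{N} c_{j,k,n} e^{i n π t}, each P_{j,k} satisfies sup_{t ∈ [0,1]} |P_{j,k}(t)| ≤ 1 and sup_{x ∈ [0,1]^m} | ∑_{j=1}^{L} γ_j ∏_{k=1}^{m} e^{i w_{j,k} x_k} − ∑_{j=1}^{L} γ_j ∏_{k=1}^{m} P_{j,k}(x_k) | ≤ ε. -/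
/-!
The even function `t ↦ e^{iw|t|}` on `[-1,1]` takes equal values at `±1`, so it extends to a
continuous function on the circle `ℝ/2ℤ`, whose characters are `t ↦ e^{inπt}`. Their span is dense
in the uniform norm (Stone–Weierstrass), which gives a trigonometric polynomial `q` with
`|e^{iwt} - q(t)| ≤ δ` on `[0,1]`. Since then `|q| ≤ 1 + δ`, the rescaled polynomial `q/(1+δ)` is
bounded by `1` and is still within `2δ` of `e^{iwt}` (`exists_trig_approx`). Finally a product of
`m` factors in the unit disc is `1`-Lipschitz in each factor (`norm_prod_sub_prod_le_sum`), so the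
errors of the `L` summands add up to at most `∑ⱼ ‖γⱼ‖ · m · η` when each factor has error `η`.
-/

open Complex

/-- The function used is the `2`-periodic even extension, `e^{iw|t|}` on `[-1,1]`. -/
theorem exists_even_extension (w : ℝ) :
    ∃ f : C(AddCircle (2 : ℝ), ℂ), ∀ t ∈ Set.Icc (0 : ℝ) 1,
      f (t : AddCircle (2 : ℝ)) = exp (I * (w : ℂ) * (t : ℂ)) := by
  have : Fact ((0 : ℝ) < 2) := ⟨by norm_num⟩
  let g : ℝ → ℂ := fun t => exp (I * (w : ℂ) * ((|t| : ℝ) : ℂ))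
  have hg : Continuous g := by fun_prop
  have hper : g (-1) = g (-1 + 2) := by
    have h1 : |(-1 : ℝ)| = |(-1 + 2 : ℝ)| := by norm_num
    simp only [g, h1]
  refine ⟨⟨AddCircle.liftIco 2 (-1) g, AddCircle.liftIco_continuous hper hg.continuousOn⟩, ?_⟩
  intro t ht
  change AddCircle.liftIco 2 (-1) g (t : AddCircle (2 : ℝ)) = _
  rcases ht.2.lt_or_eq with h | h
  · rw [AddCircle.liftIco_coe_apply ⟨by linarith [ht.1], by linarith⟩]
    simp [g, abs_of_nonneg ht.1]
  · -- The endpoint `1` lies outside `[-1,1)` and is represented there by `-1`.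
    have h2 : (t : AddCircle (2 : ℝ)) = ((-1 : ℝ) : AddCircle (2 : ℝ)) := by
      rw [h, ← AddCircle.coe_add_period 2 (-1)]
      norm_num
    rw [h2, AddCircle.liftIco_coe_apply ⟨by norm_num, by norm_num⟩]
    simp [g, h]

/-- Coefficients are recorded as a finitely supported family, so that the degree `N` can be
enlarged freely afterwards. -/
theorem exists_trig_approx (w : ℝ) (η : ℝ) (hη : 0 < η) :
    ∃ c : ℤ →₀ ℂ, ∀ t ∈ Set.Icc (0 : ℝ) 1,
      ‖c.sum fun n a => a * exp (I * (n : ℂ) * (Real.pi : ℂ) * (t : ℂ))‖ ≤ 1 ∧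
      ‖exp (I * (w : ℂ) * (t : ℂ)) -
        c.sum fun n a => a * exp (I * (n : ℂ) * (Real.pi : ℂ) * (t : ℂ))‖ ≤ η := by
  have : Fact ((0 : ℝ) < 2) := ⟨by norm_num⟩
  obtain ⟨f, hf⟩ := exists_even_extension w
  have hmem : f ∈ (Submodule.span ℂ (Set.range (@fourier 2))).topologicalClosure := by
    rw [span_fourier_closure_eq_top]; trivial
  obtain ⟨p, hp, hpf⟩ := Metric.mem_closure_iff.1 hmem (η / 2) (by linarith)
  obtain ⟨c, rfl⟩ := Finsupp.mem_span_range_iff_exists_finsupp.1 hp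
  set s : ℝ := 1 + η / 2 with hs
  have hs0 : 0 < s := by linarith
  refine ⟨((s⁻¹ : ℝ) : ℂ) • c, fun t ht => ?_⟩
  set q : ℂ := c.sum fun n a => a * exp (I * (n : ℂ) * (Real.pi : ℂ) * (t : ℂ)) with hq
  have hsum : ((((s⁻¹ : ℝ) : ℂ) • c).sum
      fun n a => a * exp (I * (n : ℂ) * (Real.pi : ℂ) * (t : ℂ))) = ((s⁻¹ : ℝ) : ℂ) * q := by
    rw [Finsupp.sum_smul_index (by simp), hq, Finsupp.mul_sum]
    simp only [mul_assoc]
  have hval : (c.sum fun n a => a • @fourier 2 n) (t : AddCircle (2 : ℝ)) = q := by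
    rw [hq, Finsupp.sum, Finsupp.sum, ContinuousMap.sum_apply]
    refine Finset.sum_congr rfl fun n _ => ?_
    rw [ContinuousMap.smul_apply, fourier_coe_apply, smul_eq_mul]
    congr 2
    push_cast
    ring
  have hE : ‖exp (I * (w : ℂ) * (t : ℂ))‖ = 1 := by
    rw [show I * (w : ℂ) * (t : ℂ) = ((w * t : ℝ) : ℂ) * I by push_cast; ring]
    exact norm_exp_ofReal_mul_I _
  have hd : ‖exp (I * (w : ℂ) * (t : ℂ)) - q‖ ≤ η / 2 := by
    rw [← hf t ht, ← hval, ← dist_eq_norm]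
    exact (ContinuousMap.dist_apply_le_dist _).trans hpf.le
  have hqs : ‖q‖ ≤ s := by
    have := norm_sub_norm_le q (exp (I * (w : ℂ) * (t : ℂ)))
    rw [norm_sub_rev] at this
    linarith
  have hn : ‖((s⁻¹ : ℝ) : ℂ) * q‖ = s⁻¹ * ‖q‖ := by
    rw [norm_mul, norm_real, Real.norm_of_nonneg (inv_nonneg.2 hs0.le)]
  rw [hsum]
  constructor
  · rw [hn, inv_mul_le_iff₀ hs0]; linarith
  · -- Rescaling moves `q` by `‖q‖ (1 - 1/s) ≤ s - 1 = η/2`.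
    have h1 : ‖q - ((s⁻¹ : ℝ) : ℂ) * q‖ ≤ η / 2 := by
      have h2 : q - ((s⁻¹ : ℝ) : ℂ) * q = ((1 - s⁻¹ : ℝ) : ℂ) * q := by push_cast; ring
      have h3 : 0 ≤ 1 - s⁻¹ := sub_nonneg.2 (inv_le_one_of_one_le₀ (by linarith))
      rw [h2, norm_mul, norm_real, Real.norm_of_nonneg h3]
      calc (1 - s⁻¹) * ‖q‖ ≤ (1 - s⁻¹) * s := by gcongr
        _ = η / 2 := by rw [sub_mul, inv_mul_cancel₀ hs0.ne', hs]; ring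
    have := norm_sub_le_norm_sub_add_norm_sub (exp (I * (w : ℂ) * (t : ℂ))) q
      (((s⁻¹ : ℝ) : ℂ) * q)
    linarith

theorem norm_prod_sub_prod_le_sum {ι : Type*} (s : Finset ι) (a b : ι → ℂ)
    (ha : ∀ i, ‖a i‖ ≤ 1) (hb : ∀ i, ‖b i‖ ≤ 1) :
    ‖∏ i ∈ s, a i - ∏ i ∈ s, b i‖ ≤ ∑ i ∈ s, ‖a i - b i‖ := by
  classical
  induction s using Finset.induction_on with
  | empty => simp
  | insert i s hi ih =>
    rw [Finset.prod_insert hi, Finset.prod_insert hi, Finset.sum_insert hi]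
    have hB : ‖∏ i ∈ s, b i‖ ≤ 1 := by
      rw [norm_prod]
      exact Finset.prod_le_one (fun _ _ => norm_nonneg _) fun i _ => hb i
    calc ‖a i * ∏ i ∈ s, a i - b i * ∏ i ∈ s, b i‖
        = ‖(a i - b i) * ∏ i ∈ s, b i + a i * (∏ i ∈ s, a i - ∏ i ∈ s, b i)‖ := by
          congr 1; ring
      _ ≤ ‖a i - b i‖ * ‖∏ i ∈ s, b i‖ + ‖a i‖ * ‖∏ i ∈ s, a i - ∏ i ∈ s, b i‖ := by
          rw [← norm_mul, ← norm_mul]; exact norm_add_le _ _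
      _ ≤ ‖a i - b i‖ + ∑ i ∈ s, ‖a i - b i‖ :=
          add_le_add (mul_le_of_le_one_right (norm_nonneg _) hB)
            ((mul_le_of_le_one_left (norm_nonneg _) (ha i)).trans ih)

/-- Products of complex exponentials `∏_k e^{i w_{j,k} x_k}` with tunable real weights can be
approximated, uniformly on `[0,1]^m`, by products of univariate trigonometric polynomials
`P_{j,k}(t) = ∑_{n=−N}^{N} c_{j,k,n} e^{inπt}` each bounded by `1` on `[0,1]`. -/
theorem discrete_weight_approx (m : ℕ) (hm : 1 ≤ m) (L : ℕ) (γ : Fin L → ℂ)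
    (W : Fin L → Fin m → ℝ) (ε : ℝ) (hε : 0 < ε) :
    ∃ (N : ℕ) (c : Fin L → Fin m → ℤ → ℂ),
      (∀ (j : Fin L) (k : Fin m), ∀ t ∈ Set.Icc (0:ℝ) 1,
        ‖∑ n ∈ Finset.Icc (-(N : ℤ)) (N : ℤ),
            c j k n * Complex.exp (I * (n : ℂ) * (Real.pi : ℂ) * (t : ℂ))‖ ≤ 1) ∧
      ∀ x ∈ Set.Icc (0 : Fin m → ℝ) 1,
        ‖∑ j : Fin L, γ j * ∏ k : Fin m, Complex.exp (I * (W j k : ℂ) * (x k : ℂ))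
          - ∑ j : Fin L, γ j * ∏ k : Fin m,
              (∑ n ∈ Finset.Icc (-(N : ℤ)) (N : ℤ),
                c j k n * Complex.exp (I * (n : ℂ) * (Real.pi : ℂ) * (x k : ℂ)))‖ ≤ ε := by
  set G : ℝ := ∑ j, ‖γ j‖ with hG
  have hG0 : 0 ≤ G := Finset.sum_nonneg fun _ _ => norm_nonneg _
  have hm0 : (0 : ℝ) < m := by exact_mod_cast hm
  -- Chosen so that `G * m * η ≤ ε`; the `+ 1` covers `γ = 0`.
  set η : ℝ := ε / (m * (G + 1)) with hη
  have hη0 : 0 < η := by positivity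
  choose c hc using fun j k => exists_trig_approx (W j k) η hη0
  let N : ℕ := Finset.univ.sup fun j => Finset.univ.sup fun k => (c j k).support.sup Int.natAbs
  have hsub : ∀ j k, (c j k).support ⊆ Finset.Icc (-(N : ℤ)) (N : ℤ) := by
    intro j k n hn
    have h1 : n.natAbs ≤ N :=
      ((Finset.le_sup (f := Int.natAbs) hn).trans
        (Finset.le_sup (f := fun k => (c j k).support.sup Int.natAbs) (Finset.mem_univ k))).trans
        (Finset.le_sup (f := fun j => Finset.univ.sup fun k => (c j k).support.sup Int.natAbs)
          (Finset.mem_univ j))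
    rw [Finset.mem_Icc]
    omega
  have hsum : ∀ j k (t : ℝ), ∑ n ∈ Finset.Icc (-(N : ℤ)) (N : ℤ),
      c j k n * exp (I * (n : ℂ) * (Real.pi : ℂ) * (t : ℂ)) =
      (c j k).sum fun n a => a * exp (I * (n : ℂ) * (Real.pi : ℂ) * (t : ℂ)) := fun j k t =>
    (Finsupp.sum_of_support_subset _ (hsub j k)
      (fun n a => a * exp (I * (n : ℂ) * (Real.pi : ℂ) * (t : ℂ))) (by simp)).symm
  refine ⟨N, fun j k n => c j k n, fun j k t ht => ?_, fun x hx => ?_⟩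
  · rw [hsum]; exact (hc j k t ht).1
  · have hxk : ∀ k, x k ∈ Set.Icc (0 : ℝ) 1 := fun k => ⟨hx.1 k, hx.2 k⟩
    simp only [hsum]
    rw [← Finset.sum_sub_distrib]
    calc _ ≤ ∑ j, ‖γ j‖ * (m * η) := by
          refine norm_sum_le_of_le _ fun j _ => ?_
          rw [← mul_sub, norm_mul]
          refine mul_le_mul_of_nonneg_left ?_ (norm_nonneg _)
          refine (norm_prod_sub_prod_le_sum _ _ _ (fun k => ?_)
            fun k => (hc j k (x k) (hxk k)).1).trans ?_
          · rw [show I * (W j k : ℂ) * (x k : ℂ) = ((W j k * x k : ℝ) : ℂ) * I by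
              push_cast; ring]
            exact (norm_exp_ofReal_mul_I _).le
          · refine (Finset.sum_le_sum fun k _ => (hc j k (x k) (hxk k)).2).trans ?_
            simp
      _ = G * (m * η) := by rw [← Finset.sum_mul]
      _ ≤ (G + 1) * (m * η) := by gcongr; linarith
      _ = ε := by rw [hη]; field_simp
end

section
/- For every m ≥ 1, every continuous function f : [0,1]^m → ℂ, and every ε > 0, there exist L ∈ ℕ, real numbers α_1, …, α_L, φ_1, …, φ_L ∈ ℝ, and vectors w_1, …, w_L ∈ ℝ^m such that sup_{x ∈ [0,1]^m} | f(x) − ∑_{n=1}^{L} α_n e^{i (w_n·x + φ_n)} | ≤ ε. -/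
open Complex

/-!
The complex span of the characters `x ↦ e^{i w·x}`, `w ∈ ℝ^m`, is a unital subalgebra of
`C([0,1]^m, ℂ)`, because a product of characters is a character, and it is closed under
conjugation, because the conjugate of the character of `w` is the character of `-w`. The
characters of the coordinate vectors separate the points of the cube, since `cos` is injective
on `[0, 1] ⊆ [0, π]`. By Stone–Weierstrass the span is therefore uniformly dense, and the polar
form `c = |c| e^{i arg c}` turns complex coefficients into real amplitudes and phases.
-/

/-- The character `x ↦ e^{i w·x}` restricted to the unit cube. -/
noncomputable def cubeChar (m : ℕ) (w : Fin m → ℝ) :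
    C(Set.Icc (0 : Fin m → ℝ) 1, ℂ) where
  toFun x := Complex.exp (I * ((∑ k, w k * x.1 k : ℝ) : ℂ))
  continuous_toFun := by
    have h : Continuous fun x : Set.Icc (0 : Fin m → ℝ) 1 => ∑ k, w k * x.1 k :=
      continuous_finsetSum _ fun k _ =>
        continuous_const.mul ((continuous_apply k).comp continuous_subtype_val)
    exact Complex.continuous_exp.comp (continuous_const.mul (Complex.continuous_ofReal.comp h))

lemma cubeChar_mul (m : ℕ) (v w : Fin m → ℝ) :
    cubeChar m v * cubeChar m w = cubeChar m (v + w) := by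
  ext x
  simp [cubeChar, ← Complex.exp_add, ← mul_add, add_mul, Finset.sum_add_distrib]

lemma cubeChar_zero (m : ℕ) : cubeChar m 0 = 1 := by
  ext x
  simp [cubeChar]

lemma cubeChar_star (m : ℕ) (w : Fin m → ℝ) : star (cubeChar m w) = cubeChar m (-w) := by
  ext x
  simp [cubeChar, ← Complex.exp_conj]

/-- The trigonometric polynomials on the cube, i.e. the linear span of the characters, as a
star subalgebra. -/
noncomputable def trigPolys (m : ℕ) : StarSubalgebra ℂ C(Set.Icc (0 : Fin m → ℝ) 1, ℂ) where
  carrier := Submodule.span ℂ (Set.range (cubeChar m))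
  add_mem' := Submodule.add_mem _
  mul_mem' {a b} ha hb := by
    have h := Submodule.mul_mem_mul ha hb
    rw [Submodule.span_mul_span] at h
    refine Submodule.span_mono ?_ h
    rintro _ ⟨_, ⟨v, rfl⟩, _, ⟨w, rfl⟩, rfl⟩
    exact ⟨v + w, (cubeChar_mul m v w).symm⟩
  algebraMap_mem' c := by
    rw [Algebra.algebraMap_eq_smul_one, ← cubeChar_zero]
    exact Submodule.smul_mem _ _ (Submodule.subset_span ⟨0, rfl⟩)
  star_mem' {a} ha := by
    refine Submodule.span_induction (p := fun a _ =>
      star a ∈ Submodule.span ℂ (Set.range (cubeChar m))) ?_ ?_ ?_ ?_ ha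
    · rintro _ ⟨w, rfl⟩
      rw [cubeChar_star]
      exact Submodule.subset_span ⟨_, rfl⟩
    · simp
    · intro a b _ _ ha hb
      rw [star_add]
      exact Submodule.add_mem _ ha hb
    · intro c a _ ha
      rw [star_smul]
      exact Submodule.smul_mem _ _ ha

lemma trigPolys_separatesPoints (m : ℕ) : (trigPolys m).toSubalgebra.SeparatesPoints := by
  intro x y hxy
  obtain ⟨k, hk⟩ : ∃ k, x.1 k ≠ y.1 k := by
    by_contra! h
    exact hxy (Subtype.ext (funext h))
  refine ⟨_, ⟨cubeChar m (Pi.single k 1), Submodule.subset_span ⟨_, rfl⟩, rfl⟩, fun h => hk ?_⟩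
  have hpi := Real.pi_gt_three
  have mem (z : Set.Icc (0 : Fin m → ℝ) 1) : z.1 k ∈ Set.Icc 0 Real.pi := by
    have h0 : 0 ≤ z.1 k := z.2.1 k
    have h1 : z.1 k ≤ 1 := z.2.2 k
    exact ⟨h0, by linarith⟩
  have re_eq (z : Set.Icc (0 : Fin m → ℝ) 1) :
      (cubeChar m (Pi.single k 1) z).re = Real.cos (z.1 k) := by
    change (Complex.exp (I * ((∑ j, (Pi.single k 1 : Fin m → ℝ) j * z.1 j : ℝ) : ℂ))).re = _
    rw [mul_comm, Complex.exp_ofReal_mul_I_re]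
    simp [Pi.single_apply]
  refine Real.injOn_cos (mem x) (mem y) ?_
  rw [← re_eq, ← re_eq]
  exact congrArg Complex.re h

/-- Universal approximation theorem with the discriminatory activation `σ(t) = e^{it}`:
every continuous `f : [0,1]^m → ℂ` is uniformly approximated by finite sums
`∑_{n=1}^{L} α_n e^{i(w_n·x + φ_n)}` with `α_n, φ_n ∈ ℝ` and `w_n ∈ ℝ^m`. -/
theorem uat_exponential (m : ℕ) (hm : 1 ≤ m) (f : (Fin m → ℝ) → ℂ)
    (hf : ContinuousOn f (Set.Icc 0 1)) (ε : ℝ) (hε : 0 < ε) :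
    ∃ (L : ℕ) (α φ : Fin L → ℝ) (w : Fin L → Fin m → ℝ),
      ∀ x ∈ Set.Icc (0 : Fin m → ℝ) 1,
        ‖f x - ∑ n : Fin L,
            (α n : ℂ) * Complex.exp (I * (((∑ k, w n k * x k) + φ n : ℝ) : ℂ))‖ ≤ ε := by
  let F : C(Set.Icc (0 : Fin m → ℝ) 1, ℂ) := ⟨_, hf.domRestrict⟩
  have hF : F ∈ (trigPolys m).topologicalClosure := by
    rw [ContinuousMap.starSubalgebra_topologicalClosure_eq_top_of_separatesPoints _
      (trigPolys_separatesPoints m)]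
    trivial
  obtain ⟨g, hg, hFg⟩ := Metric.mem_closure_iff.1 hF ε hε
  obtain ⟨L, c, e, rfl⟩ := Submodule.mem_span_set'.1 hg
  choose w hw using fun n => (e n).2
  refine ⟨L, fun n => ‖c n‖, fun n => (c n).arg, w, fun x hx => ?_⟩
  have h := (ContinuousMap.dist_apply_le_dist (f := F) ⟨x, hx⟩).trans hFg.le
  rw [dist_eq_norm] at h
  change ‖f x - _‖ ≤ ε at h
  rw [ContinuousMap.sum_apply] at h
  convert h using 3
  refine Finset.sum_congr rfl fun n _ => ?_
  rw [ContinuousMap.smul_apply, ← hw n]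
  change _ = c n * Complex.exp (I * ((∑ k, w n k * x k : ℝ) : ℂ))
  conv_rhs => rw [← Complex.norm_mul_exp_arg_mul_I (c n)]
  rw [mul_assoc, ← Complex.exp_add]
  congr 2
  push_cast
  ring
end

section
/- For every m ≥ 1, every continuous function f : [0,1]^m → ℂ with |f(x)| ≤ 1 for all x, and every ε > 0, there exist L ∈ ℕ and unitary matrices A_0, A_1, …, A_L ∈ U(2m) such that sup_{x ∈ [0,1]^m} | (A_L · V_m(x) · A_{L−1} · V_m(x) ⋯ A_1 · V_m(x) · A_0)_{1,1} − f(x) | ≤ ε, where M_{1,1} denotes the top-left entry of the matrix M. -/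
/-!
Let `K = [0,1]^m`, and let `S` be the uniform closure, in `C(K, M_{2m}(ℂ))`, of the monoid generated
by the encoding gate `V = V_m` and the constant unitaries. Elements of the monoid itself are exactly
circuits, so it suffices to find, for `f` continuous with `|f| < 1`, an element of `S` whose
top-left entry is `f` (a general `f` is first shrunk slightly).

The set `lieOf S` of all `X` with `exp (tX) ∈ S` for every real `t` is a closed real subspace by the
Lie–Trotter formula (`lie_trotter`), stable under conjugation by elements of `S` whose inverse is in
`S`, hence under brackets (`bracket_mem_lieOf`). It contains every constant skew-adjoint matrix.

Fix two coordinates `p ≠ q` and let `σ_x, σ_y, σ_z` be the Pauli matrices on their plane. By the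
Pauli commutation relations, the real functions `a` with `a · iσ_x ∈ lieOf S` form a closed
subalgebra of `C(K, ℝ)` (`coeffAlg`). It contains `x ↦ cos (π x_k)`: the inverse of `V` is the
conjugate of `V` by a permutation, so `V (iσ_x) V⁻¹ ∈ lieOf S` on the plane of the `k`-th block, and
symmetrising under the swap of the two coordinates leaves `cos (π x_k) · iσ_x` (`tens_cos_mem`).
Since `t ↦ cos (πt)` is injective on `[0,1]`, Stone–Weierstrass shows that every `a ∈ C(K, ℝ)` is
allowed (`coeffAlg_eq_top`), and bracketing with `iσ_y` gives `a · iσ_z` too.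

Finally, for `f = a + ib` with `|f| < 1`, put `θ = arccos a`, `n_z = b / √(1 - a²)`,
`n_x = √(1 - n_z²)`. Euler's formula shows that `exp (iθ (n_z σ_z + n_x σ_x)) ∈ S` has entry
`cos θ + i n_z sin θ = f` at `(p, p)` (`exists_entry_eq`).
-/

open Complex Matrix

/-- The encoding gate `V_m(x) ∈ M_{2m}(ℂ)`: the diagonal matrix whose `(2k−1)`-th diagonal
entry is `e^{iπ x_k/2}` and whose `2k`-th diagonal entry is `e^{−iπ x_k/2}` (1-indexed). -/
noncomputable def Vm (m : ℕ) (x : Fin m → ℝ) : Matrix (Fin (2*m)) (Fin (2*m)) ℂ :=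
  Matrix.diagonal fun i =>
    if i.val % 2 = 0 then
      Complex.exp (I * (Real.pi : ℂ) * ((x ⟨i.val / 2, by have := i.isLt; omega⟩ : ℝ) : ℂ) / 2)
    else
      Complex.exp (-(I * (Real.pi : ℂ) * ((x ⟨i.val / 2, by have := i.isLt; omega⟩ : ℝ) : ℂ) / 2))

/-- The circuit `A_L · V_m(x) · A_{L−1} · V_m(x) ⋯ A_1 · V_m(x) · A_0`. -/
noncomputable def circVm (m : ℕ) (L : ℕ) (A : ℕ → Matrix (Fin (2*m)) (Fin (2*m)) ℂ)
    (x : Fin m → ℝ) : Matrix (Fin (2*m)) (Fin (2*m)) ℂ :=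
  match L with
  | 0 => A 0
  | n + 1 => A (n + 1) * Vm m x * circVm m n A x

open Filter Topology

/-! ### The Lie algebra of a closed submonoid of a Banach algebra -/

section Abstract
variable {B : Type*} [NormedRing B] [NormOneClass B]

lemma norm_exp_le_exp_norm_aux [NormedAlgebra ℝ B] (x : B) :
    ‖NormedSpace.exp x‖ ≤ Real.exp ‖x‖ := by
  rw [NormedSpace.exp_eq_tsum ℝ, Real.exp_eq_exp_ℝ, NormedSpace.exp_eq_tsum ℝ]
  refine tsum_of_norm_bounded (NormedSpace.expSeries_summable' (𝕂 := ℝ) ‖x‖).hasSum fun n => ?_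
  rw [norm_smul, norm_inv, smul_eq_mul]
  simp only [RCLike.norm_natCast]
  gcongr
  exact norm_pow_le x n

lemma norm_pow_sub_pow_le_aux (g h : B) (c : ℝ) (hg : ‖g‖ ≤ c) (hh : ‖h‖ ≤ c) (hc : 1 ≤ c)
    (k : ℕ) : ‖g ^ k - h ^ k‖ ≤ k * c ^ k * ‖g - h‖ := by
  induction k with
  | zero => simp
  | succ k ih =>
    have e : g ^ (k + 1) - h ^ (k + 1) = g ^ k * (g - h) + (g ^ k - h ^ k) * h := by
      rw [pow_succ, pow_succ]; noncomm_ring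
    have hgk : ‖g ^ k‖ ≤ c ^ k := (norm_pow_le g k).trans (by gcongr)
    have hck : c ^ k ≤ c ^ (k + 1) := pow_le_pow_right₀ hc (Nat.le_succ k)
    rw [e]
    calc _ ≤ ‖g ^ k‖ * ‖g - h‖ + ‖g ^ k - h ^ k‖ * ‖h‖ :=
          (norm_add_le _ _).trans (add_le_add (norm_mul_le _ _) (norm_mul_le _ _))
      _ ≤ c ^ (k + 1) * ‖g - h‖ + (k * c ^ k * ‖g - h‖) * c := by
          gcongr
          exact hgk.trans hck
      _ = _ := by push_cast; ring

variable [NormedAlgebra ℝ B] [CompleteSpace B]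

/-- The Lie–Trotter product formula. -/
lemma lie_trotter (X Y : B) :
    Tendsto (fun n : ℕ =>
        (NormedSpace.exp ((n : ℝ)⁻¹ • X) * NormedSpace.exp ((n : ℝ)⁻¹ • Y)) ^ n) atTop
      (𝓝 (NormedSpace.exp (X + Y))) := by
  let _ := NormedAlgebra.restrictScalars ℚ ℝ B
  set c := ‖X‖ + ‖Y‖ with hc
  -- the curves `exp (tX) exp (tY)` and `exp (t(X+Y))` agree to first order at `t = 0`
  have hd : HasDerivAt (fun t : ℝ => NormedSpace.exp (t • X) * NormedSpace.exp (t • Y) -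
      NormedSpace.exp (t • (X + Y))) 0 0 := by
    have h := ((hasDerivAt_exp_smul_const X (0 : ℝ)).mul
      (hasDerivAt_exp_smul_const Y (0 : ℝ))).sub (hasDerivAt_exp_smul_const (X + Y) (0 : ℝ))
    simp only [zero_smul, NormedSpace.exp_zero, one_mul, mul_one, sub_self] at h
    exact h
  have hlim : Tendsto (fun n : ℕ => (n : ℝ) *
      ‖NormedSpace.exp ((n : ℝ)⁻¹ • X) * NormedSpace.exp ((n : ℝ)⁻¹ • Y) -
        NormedSpace.exp ((n : ℝ)⁻¹ • (X + Y))‖) atTop (𝓝 0) := by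
    have h := (hd.tendsto_slope_zero).comp
      (tendsto_nhdsWithin_iff.2 ⟨tendsto_inv_atTop_nhds_zero_nat (𝕜 := ℝ),
        (eventually_ge_atTop 1).mono fun n hn => by
          simp only [Set.mem_compl_iff, Set.mem_singleton_iff, inv_eq_zero, Nat.cast_eq_zero]
          omega⟩)
    have h2 := h.norm
    simp only [norm_zero] at h2
    refine h2.congr fun n => ?_
    simp [norm_smul]
  have hmain : Tendsto (fun n : ℕ =>
      (NormedSpace.exp ((n : ℝ)⁻¹ • X) * NormedSpace.exp ((n : ℝ)⁻¹ • Y)) ^ n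
      - NormedSpace.exp (X + Y)) atTop (𝓝 0) := by
    refine squeeze_zero_norm' ?_ (by simpa only [mul_zero] using hlim.const_mul (Real.exp c))
    filter_upwards [eventually_ge_atTop 1] with n hn
    have hn0 : (n : ℝ) ≠ 0 := by positivity
    have hpow : NormedSpace.exp (X + Y) = NormedSpace.exp ((n : ℝ)⁻¹ • (X + Y)) ^ n := by
      rw [← NormedSpace.exp_nsmul, ← Nat.cast_smul_eq_nsmul ℝ, smul_smul,
        mul_inv_cancel₀ hn0, one_smul]
    have hnX : ∀ W : B, ‖(n : ℝ)⁻¹ • W‖ = (n : ℝ)⁻¹ * ‖W‖ := fun W => by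
      rw [norm_smul, norm_inv, RCLike.norm_natCast]
    have b1 : ‖NormedSpace.exp ((n : ℝ)⁻¹ • X) * NormedSpace.exp ((n : ℝ)⁻¹ • Y)‖ ≤
        Real.exp ((n : ℝ)⁻¹ * c) := by
      rw [hc, mul_add, Real.exp_add, ← hnX, ← hnX]
      exact (norm_mul_le _ _).trans (mul_le_mul (norm_exp_le_exp_norm_aux _)
        (norm_exp_le_exp_norm_aux _) (norm_nonneg _) (Real.exp_pos _).le)
    have b2 : ‖NormedSpace.exp ((n : ℝ)⁻¹ • (X + Y))‖ ≤ Real.exp ((n : ℝ)⁻¹ * c) := by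
      refine (norm_exp_le_exp_norm_aux _).trans (Real.exp_le_exp.2 ?_)
      rw [hnX]
      gcongr
      exact norm_add_le _ _
    have b3 : 1 ≤ Real.exp ((n : ℝ)⁻¹ * c) := Real.one_le_exp (by positivity)
    have := norm_pow_sub_pow_le_aux _ _ _ b1 b2 b3 n
    rw [← Real.exp_nat_mul, ← mul_assoc (n : ℝ), mul_inv_cancel₀ hn0, one_mul] at this
    rw [hpow]
    linarith
  simpa using hmain.add_const (NormedSpace.exp (X + Y))

/-- The Lie algebra of a closed submonoid `S`: all `X` whose one-parameter group
`t ↦ exp (tX)` stays in `S`. -/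
def lieOf (S : Submonoid B) (hS : IsClosed (S : Set B)) : Submodule ℝ B where
  carrier := {X | ∀ t : ℝ, NormedSpace.exp (t • X) ∈ S}
  zero_mem' := fun t => by simp [S.one_mem]
  smul_mem' := fun c X hX t => by rw [smul_smul]; exact hX _
  add_mem' := fun {X Y} hX hY t => by
    rw [smul_add]
    refine hS.mem_of_tendsto (lie_trotter (t • X) (t • Y)) (Eventually.of_forall fun n => ?_)
    refine S.pow_mem (S.mul_mem ?_ ?_) n
    · rw [smul_smul]; exact hX _
    · rw [smul_smul]; exact hY _

variable {S : Submonoid B} {hS : IsClosed (S : Set B)}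

lemma mem_lieOf {X : B} : X ∈ lieOf S hS ↔ ∀ t : ℝ, NormedSpace.exp (t • X) ∈ S := Iff.rfl

lemma exp_mem_of_mem_lieOf {X : B} (hX : X ∈ lieOf S hS) : NormedSpace.exp X ∈ S := by
  simpa using hX 1

lemma isClosed_lieOf : IsClosed (lieOf S hS : Set B) := by
  let _ := NormedAlgebra.restrictScalars ℚ ℝ B
  have : (lieOf S hS : Set B) = ⋂ t : ℝ, (fun X : B => NormedSpace.exp (t • X)) ⁻¹' S := by
    ext X; simp [mem_lieOf]
  rw [this]
  exact isClosed_iInter fun t => hS.preimage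
    (NormedSpace.exp_continuous.comp (continuous_const_smul t))

lemma conj_mem_lieOf {X g g' : B} (hX : X ∈ lieOf S hS) (hg : g ∈ S) (hg' : g' ∈ S)
    (h1 : g * g' = 1) (h2 : g' * g = 1) : g * X * g' ∈ lieOf S hS := fun t => by
  let _ := NormedAlgebra.restrictScalars ℚ ℝ B
  have := NormedSpace.exp_units_conj (⟨g, g', h1, h2⟩ : Bˣ) (t • X)
  simp only [Units.inv_mk] at this
  rw [← smul_mul_assoc, ← mul_smul_comm]
  rw [this]
  exact S.mul_mem (S.mul_mem hg (hX t)) hg'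

/-- `[X, Y]` is the derivative at `0` of `t ↦ exp (tX) Y exp (-tX)`, a curve in the closed subspace
`lieOf S hS`. -/
lemma bracket_mem_lieOf {X Y : B} (hX : X ∈ lieOf S hS) (hY : Y ∈ lieOf S hS) :
    X * Y - Y * X ∈ lieOf S hS := by
  let _ := NormedAlgebra.restrictScalars ℚ ℝ B
  have hd : HasDerivAt (fun t : ℝ => NormedSpace.exp (t • X) * Y * NormedSpace.exp (t • -X))
      (X * Y - Y * X) 0 := by
    have h := ((hasDerivAt_exp_smul_const X (0 : ℝ)).mul_const Y).mul
      (hasDerivAt_exp_smul_const (-X) (0 : ℝ))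
    simp only [zero_smul, NormedSpace.exp_zero, one_mul, mul_one, mul_neg,
      ← sub_eq_add_neg] at h
    exact h
  have hcurve : ∀ t : ℝ,
      NormedSpace.exp (t • X) * Y * NormedSpace.exp (t • -X) ∈ lieOf S hS := fun t => by
    refine conj_mem_lieOf hY (hX t) ((lieOf S hS).neg_mem hX t) ?_ ?_
    · rw [← NormedSpace.exp_add_of_commute
        ((Commute.refl X).neg_right.smul_left t |>.smul_right t)]
      simp
    · rw [← NormedSpace.exp_add_of_commute
        ((Commute.refl X).neg_left.smul_left t |>.smul_right t)]
      simp
  refine isClosed_lieOf.mem_of_tendsto hd.tendsto_slope_zero (Eventually.of_forall fun t => ?_)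
  exact (lieOf S hS).smul_mem _ ((lieOf S hS).sub_mem (hcurve _) (hcurve _))

end Abstract

/-! ### Exponentials of elements with `H³ = H` -/

section Exp
variable {B : Type*} [NormedRing B] [NormedAlgebra ℂ B] [CompleteSpace B]

lemma exp_smul_idempotent {e : B} (he : e * e = e) (c : ℂ) :
    NormedSpace.exp (c • e) = 1 + (Complex.exp c - 1) • e := by
  have h1 : HasSum (fun n : ℕ => ((n.factorial : ℂ)⁻¹ • c ^ n) • e) (Complex.exp c • e) := by
    rw [Complex.exp_eq_exp_ℂ]
    exact (NormedSpace.exp_series_hasSum_exp' (𝕂 := ℂ) c).smul_const e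
  have h2 := h1.add (hasSum_ite_eq (0 : ℕ) (1 - e))
  refine (NormedSpace.exp_series_hasSum_exp' (𝕂 := ℂ) (c • e)).unique ?_
  convert h2 using 1
  · funext n
    rcases n with _ | n
    · simp
    · have : e ^ (n + 1) = e := IsIdempotentElem.pow_succ_eq n he
      simp [smul_pow, this, smul_smul]
  · rw [sub_smul, one_smul]; abel

/-- If `H³ = H`, then `(H² + H)/2` and `(H² - H)/2` are orthogonal idempotents with difference `H`,
which reduces `exp (zH)` to the exponential of multiples of idempotents. -/
lemma exp_smul_of_cube {H : B} (hH : H * H * H = H) (z : ℂ) :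
    NormedSpace.exp (z • H) = 1 + Complex.sinh z • H + (Complex.cosh z - 1) • (H * H) := by
  let _ := NormedAlgebra.restrictScalars ℚ ℂ B
  have h4 : H * H * (H * H) = H * H := by rw [← mul_assoc, hH]
  have h3 : H * (H * H) = H := by rw [← mul_assoc, hH]
  set e := (1 / 2 : ℂ) • (H * H + H) with he
  set d := (1 / 2 : ℂ) • (H * H - H) with hd
  have hee : e * e = e := by
    simp only [he, smul_mul_smul_comm, mul_add, add_mul, h4, h3, hH]; module
  have hdd : d * d = d := by
    simp only [hd, smul_mul_smul_comm, mul_sub, sub_mul, h4, h3, hH]; module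
  have hed : e * d = 0 := by
    simp only [hd, he, smul_mul_smul_comm, mul_sub, add_mul, h4, h3, hH]; module
  have hde : d * e = 0 := by
    simp only [hd, he, smul_mul_smul_comm, mul_add, sub_mul, h4, h3, hH]; module
  have hz : z • H = z • e + (-z) • d := by rw [he, hd]; module
  have hcomm : Commute (z • e) ((-z) • d) :=
    ((show Commute e d from by rw [Commute, SemiconjBy, hed, hde]).smul_left z).smul_right (-z)
  rw [hz, NormedSpace.exp_add_of_commute hcomm, exp_smul_idempotent hee, exp_smul_idempotent hdd]
  simp only [mul_add, add_mul, one_mul, mul_one, smul_mul_smul_comm, hed, smul_zero, add_zero]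
  rw [he, hd, Complex.sinh, Complex.cosh]
  module
end Exp

/-! ### Matrix-valued functions and Pauli matrices -/

section MatrixValued
open scoped Matrix.Norms.L2Operator

variable {K n : Type*} [TopologicalSpace K]

/-- `tens Y a` is the matrix-valued function `x ↦ a x • Y`. -/
noncomputable def tens (Y : Matrix n n ℂ) : C(K, ℝ) →L[ℝ] C(K, Matrix n n ℂ) :=
  (ContinuousLinearMap.toSpanSingleton ℝ Y).compLeftContinuous ℝ K

@[simp]
lemma tens_apply (Y : Matrix n n ℂ) (a : C(K, ℝ)) (x : K) : tens Y a x = a x • Y := rfl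

variable [DecidableEq n]

/-- `iσ_x` on the plane of the coordinates `p`, `q`. -/
noncomputable def matX (p q : n) : Matrix n n ℂ := single p q I + single q p I

/-- `iσ_y` on the plane of the coordinates `p`, `q`. -/
noncomputable def matY (p q : n) : Matrix n n ℂ := single p q 1 - single q p 1

/-- `iσ_z` on the plane of the coordinates `p`, `q`. -/
noncomputable def matZ (p q : n) : Matrix n n ℂ := single p p I - single q q I

lemma star_matX (p q : n) : star (matX p q) = -matX p q := by
  simp [matX, star_eq_conjTranspose, conjTranspose_single, ← single_neg, add_comm]

lemma star_matY (p q : n) : star (matY p q) = -matY p q := by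
  simp [matY, star_eq_conjTranspose, conjTranspose_single]

lemma exists_perm_pair {p q i j : n} (hpq : p ≠ q) (hij : i ≠ j) :
    ∃ σ : Equiv.Perm n, σ p = i ∧ σ q = j := by
  have h1 : Equiv.swap p i q ≠ i := fun h => hpq <| by
    have := congrArg (Equiv.swap p i) h
    simpa using this.symm
  refine ⟨Equiv.swap (Equiv.swap p i q) j * Equiv.swap p i, ?_, ?_⟩
  · simp [Equiv.swap_apply_of_ne_of_ne h1.symm hij]
  · simp

variable [Fintype n]

lemma tens_bracket (Y Z : Matrix n n ℂ) (a b : C(K, ℝ)) :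
    tens Y a * tens Z b - tens Z b * tens Y a = tens (Y * Z - Z * Y) (a * b) := by
  ext1 x
  simp only [ContinuousMap.sub_apply, ContinuousMap.mul_apply, tens_apply, smul_mul_smul_comm,
    smul_sub, mul_comm (b x)]

lemma bracket_XY {p q : n} (h : p ≠ q) :
    matX p q * matY p q - matY p q * matX p q = (-2 : ℝ) • matZ p q := by
  simp only [matX, matY, matZ, mul_add, add_mul, mul_sub, sub_mul, single_mul_single_same,
    single_mul_single_of_ne _ _ _ _ h, single_mul_single_of_ne _ _ _ _ h.symm, mul_one, one_mul]
  module

lemma bracket_ZX {p q : n} (h : p ≠ q) :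
    matZ p q * matX p q - matX p q * matZ p q = (-2 : ℝ) • matY p q := by
  simp only [matX, matY, matZ, mul_add, add_mul, mul_sub, sub_mul, single_mul_single_same,
    single_mul_single_of_ne _ _ _ _ h, single_mul_single_of_ne _ _ _ _ h.symm, I_mul_I,
    ← single_neg]
  module

lemma bracket_YZ {p q : n} (h : p ≠ q) :
    matY p q * matZ p q - matZ p q * matY p q = (-2 : ℝ) • matX p q := by
  simp only [matX, matY, matZ, mul_sub, sub_mul, single_mul_single_same,
    single_mul_single_of_ne _ _ _ _ h, single_mul_single_of_ne _ _ _ _ h.symm, mul_one, one_mul]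
  module

/-- On the plane of `p`, `q` the matrix `n_z σ_z + n_x σ_x` is an involution, so its exponential
is given by Euler's formula. -/
lemma exp_plane_apply {p q : n} (h : p ≠ q) (θ nz nx : ℝ) (hn : nz ^ 2 + nx ^ 2 = 1) :
    NormedSpace.exp ((θ * nz) • matZ p q + (θ * nx) • matX p q) p p
      = Real.cos θ + I * (Real.sin θ * nz : ℝ) := by
  set H : Matrix n n ℂ := single p p (nz : ℂ) - single q q (nz : ℂ) + single p q (nx : ℂ)
    + single q p (nx : ℂ) with hH
  have hn' : (nz : ℂ) * nz + nx * nx = 1 := by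
    rw [← sq, ← sq]; exact_mod_cast hn
  have hHH : H * H = single p p 1 + single q q 1 := by
    rw [hH, ← hn']
    simp only [mul_add, add_mul, mul_sub, sub_mul, single_mul_single_same,
      single_mul_single_of_ne _ _ _ _ h, single_mul_single_of_ne _ _ _ _ h.symm, single_add,
      mul_comm (nx : ℂ) nz]
    abel
  have hH3 : H * H * H = H := by
    rw [hHH, hH]
    simp only [mul_add, add_mul, mul_sub, single_mul_single_same,
      single_mul_single_of_ne _ _ _ _ h, single_mul_single_of_ne _ _ _ _ h.symm, one_mul]
    abel
  have hF : (θ * nz) • matZ p q + (θ * nx) • matX p q = ((θ : ℂ) * I) • H := by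
    simp only [hH, matZ, matX, smul_add, smul_sub, smul_single, real_smul, smul_eq_mul,
      ofReal_mul]
    rw [mul_right_comm (θ : ℂ) I nz, mul_right_comm (θ : ℂ) I nx]
    abel
  rw [hF, exp_smul_of_cube hH3, hHH, hH, Complex.sinh_mul_I, Complex.cosh_mul_I]
  simp [h.symm]
  ring

lemma permMatrix_conj (σ : Equiv.Perm n) (M : Matrix n n ℂ) :
    σ.permMatrix ℂ * M * (σ⁻¹).permMatrix ℂ = M.submatrix σ σ := by
  rw [Equiv.Perm.permMatrix, Equiv.Perm.permMatrix, PEquiv.toMatrix_toPEquiv_mul,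
    PEquiv.mul_toMatrix_toPEquiv]
  rfl

lemma permMatrix_mem_unitary (σ : Equiv.Perm n) : σ.permMatrix ℂ ∈ unitaryGroup n ℂ := by
  rw [mem_unitaryGroup_iff, star_eq_conjTranspose, conjTranspose_permMatrix]
  simpa using permMatrix_conj σ (1 : Matrix n n ℂ)

variable [CompactSpace K]

lemma exp_apply (F : C(K, Matrix n n ℂ)) (x : K) :
    NormedSpace.exp F x = NormedSpace.exp (F x) := by
  let _ := NormedAlgebra.restrictScalars ℚ ℝ C(K, Matrix n n ℂ)
  exact NormedSpace.map_exp ((Pi.evalRingHom (fun _ : K => Matrix n n ℂ) x).comp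
    ContinuousMap.coeFnRingHom) (continuous_eval_const x) F

variable [Nonempty K] [Nonempty n] {S : Submonoid C(K, Matrix n n ℂ)}
  {hS : IsClosed (S : Set C(K, Matrix n n ℂ))}

/-- Constant skew-adjoint matrices lie in the Lie algebra once all constant unitaries lie in `S`. -/
lemma const_skew_mem (hU : ∀ U ∈ unitaryGroup n ℂ, ContinuousMap.const K U ∈ S)
    {Y : Matrix n n ℂ} (hY : star Y = -Y) : tens Y 1 ∈ lieOf S hS := fun t => by
  let _ := NormedAlgebra.restrictScalars ℚ ℝ (Matrix n n ℂ)
  have hsk : t • Y ∈ skewAdjoint (Matrix n n ℂ) := by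
    rw [skewAdjoint.mem_iff, star_smul, hY]; simp
  convert hU _ (NormedSpace.exp_mem_unitary_of_mem_skewAdjoint hsk) using 1
  ext1 x
  rw [exp_apply]
  simp

lemma tens_bracket_mem {Y Z W : Matrix n n ℂ} {a b : C(K, ℝ)} (ha : tens Y a ∈ lieOf S hS)
    (hb : tens Z b ∈ lieOf S hS) (h : Y * Z - Z * Y = (-2 : ℝ) • W) :
    tens W (a * b) ∈ lieOf S hS := by
  have h1 := bracket_mem_lieOf ha hb
  rw [tens_bracket, h] at h1
  have h2 := (lieOf S hS).smul_mem (-2 : ℝ)⁻¹ h1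
  convert h2 using 1
  ext1 x
  simp [smul_smul, mul_comm]

lemma tens_Z_of_X (hU : ∀ U ∈ unitaryGroup n ℂ, ContinuousMap.const K U ∈ S) {p q : n}
    (h : p ≠ q) {a : C(K, ℝ)} (ha : tens (matX p q) a ∈ lieOf S hS) :
    tens (matZ p q) a ∈ lieOf S hS := by
  simpa using tens_bracket_mem ha (const_skew_mem hU (star_matY p q)) (bracket_XY h)

/-- The scalar functions `a` for which `a · iσ_x` lies in the Lie algebra of `S`. Products stay
inside because the brackets of the Pauli matrices multiply the scalar coefficients. -/
noncomputable def coeffAlg (hS : IsClosed (S : Set C(K, Matrix n n ℂ)))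
    (hU : ∀ U ∈ unitaryGroup n ℂ, ContinuousMap.const K U ∈ S) {p q : n} (h : p ≠ q) :
    Subalgebra ℝ C(K, ℝ) where
  carrier := {a | tens (matX p q) a ∈ lieOf S hS}
  add_mem' := fun {a b} ha hb => by
    simp only [Set.mem_ofPred_eq, map_add] at *
    exact (lieOf S hS).add_mem ha hb
  mul_mem' := fun {a b} ha hb => by
    have hZ := tens_Z_of_X (hS := hS) hU h hb
    have hY : tens (matY p q) a ∈ lieOf S hS := by
      simpa using tens_bracket_mem (tens_Z_of_X (hS := hS) hU h ha)
        (const_skew_mem hU (star_matX p q))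
        (bracket_ZX h)
    exact tens_bracket_mem hY hZ (bracket_YZ h)
  algebraMap_mem' := fun r => by
    rw [Set.mem_ofPred_eq, Algebra.algebraMap_eq_smul_one, map_smul]
    exact (lieOf S hS).smul_mem r (const_skew_mem hU (star_matX p q))

lemma isClosed_coeffAlg (hU : ∀ U ∈ unitaryGroup n ℂ, ContinuousMap.const K U ∈ S) {p q : n}
    (h : p ≠ q) : IsClosed (coeffAlg hS hU h : Set C(K, ℝ)) :=
  (isClosed_lieOf (hS := hS)).preimage (tens (K := K) (matX p q)).continuous

/-- The Lie algebra is stable under permuting coordinates, i.e. under conjugation by constant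
permutation matrices. -/
lemma perm_conj_mem (hU : ∀ U ∈ unitaryGroup n ℂ, ContinuousMap.const K U ∈ S)
    (σ : Equiv.Perm n) {F G : C(K, Matrix n n ℂ)} (hF : F ∈ lieOf S hS)
    (hG : ∀ x, G x = (F x).submatrix σ σ) : G ∈ lieOf S hS := by
  have h := conj_mem_lieOf hF (hU _ (permMatrix_mem_unitary σ))
    (hU _ (permMatrix_mem_unitary σ⁻¹)) ?_ ?_
  · convert h using 1
    ext1 x
    rw [hG, ← permMatrix_conj]
    rfl
  · ext1 x
    simpa using permMatrix_conj σ (1 : Matrix n n ℂ)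
  · ext1 x
    simpa using permMatrix_conj σ⁻¹ (1 : Matrix n n ℂ)

/-- The pair of coordinates carrying a coefficient is immaterial, as constant permutations are
available. -/
lemma tens_X_transfer (hU : ∀ U ∈ unitaryGroup n ℂ, ContinuousMap.const K U ∈ S)
    {p q i j : n} (hpq : p ≠ q) (hij : i ≠ j) {a : C(K, ℝ)}
    (ha : tens (matX i j) a ∈ lieOf S hS) : tens (matX p q) a ∈ lieOf S hS := by
  obtain ⟨σ, rfl, rfl⟩ := exists_perm_pair hpq hij
  refine perm_conj_mem hU σ ha fun x => ?_
  simp [matX, submatrix_add]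

/-- Let a diagonal gate `V` and its inverse lie in `S`. Half the sum of `V (iσ_x) V⁻¹` and its image
under the swap of `i` and `j` is `c · iσ_x`, with `c` as in `hc`. For phases `e^{±iφ/2}` at `i` and
`j` this `c` is `cos φ`. -/
lemma tens_cos_mem (hU : ∀ U ∈ unitaryGroup n ℂ, ContinuousMap.const K U ∈ S)
    {V V' : C(K, Matrix n n ℂ)} (hV : V ∈ S) (hV' : V' ∈ S) (v v' : K → n → ℂ)
    (hv : ∀ x, V x = diagonal (v x)) (hv' : ∀ x, V' x = diagonal (v' x))
    (hvv : ∀ x k, v x k * v' x k = 1) {i j : n} (hij : i ≠ j) (c : C(K, ℝ))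
    (hc : ∀ x, v x i * v' x j + v x j * v' x i = 2 * (c x : ℂ)) :
    tens (matX i j) c ∈ lieOf S hS := by
  have h1 : V * V' = 1 := by
    ext1 x; simp [hv, hv', hvv]
  have h2 : V' * V = 1 := by
    ext1 x; simp [hv, hv', mul_comm (v' x _), hvv]
  have hW := conj_mem_lieOf (const_skew_mem (hS := hS) hU (star_matX i j)) hV hV' h1 h2
  have hWx : ∀ x, (V * tens (matX i j) 1 * V' : C(K, Matrix n n ℂ)) x
      = single i j (v x i * v' x j * I) + single j i (v x j * v' x i * I) := fun x => by
    simp only [ContinuousMap.mul_apply, hv, hv', tens_apply, ContinuousMap.one_apply, one_smul,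
      matX]
    ext k l
    simp only [mul_diagonal, diagonal_mul, Matrix.add_apply, single_apply]
    split_ifs <;> grind
  obtain ⟨G, hG⟩ : ∃ G : C(K, Matrix n n ℂ), ∀ x, G x =
      ((V * tens (matX i j) 1 * V' : C(K, Matrix n n ℂ)) x).submatrix
        (Equiv.swap i j) (Equiv.swap i j) :=
    ⟨⟨fun x => ((V * tens (matX i j) 1 * V' : C(K, Matrix n n ℂ)) x).submatrix
        (Equiv.swap i j) (Equiv.swap i j),
      (ContinuousMap.continuous _).matrix_submatrix _ _⟩, fun x => rfl⟩
  have hsum := (lieOf S hS).smul_mem (2⁻¹ : ℝ)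
    ((lieOf S hS).add_mem hW (perm_conj_mem hU _ hW hG))
  convert hsum using 1
  ext1 x
  rw [ContinuousMap.smul_apply, ContinuousMap.add_apply, hG, hWx, submatrix_add]
  simp only [Pi.add_apply, submatrix_single_equiv, Equiv.symm_swap, Equiv.swap_apply_left,
    Equiv.swap_apply_right, tens_apply, matX]
  have e : ((c x : ℝ) : ℂ) * I = 2⁻¹ * (v x i * v' x j * I + v x j * v' x i * I) := by
    rw [← add_mul, hc]; ring
  simp only [smul_add, smul_single, real_smul, e, mul_add, single_add]
  push_cast
  abel

end MatrixValued

/-! ### The closed monoid of circuits -/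

section Circuit
open scoped Matrix.Norms.L2Operator

/-- The cube `[0,1]^m`. -/
abbrev Cube (m : ℕ) := Set.Icc (0 : Fin m → ℝ) 1

/-- The matrices on which `Vm m` acts. -/
abbrev Mat (m : ℕ) := Matrix (Fin (2 * m)) (Fin (2 * m)) ℂ

/-- The diagonal of `Vm m x`. -/
noncomputable def phase (m : ℕ) (x : Fin m → ℝ) (i : Fin (2 * m)) : ℂ :=
  if i.val % 2 = 0 then
    Complex.exp (I * (Real.pi : ℂ) * ((x ⟨i.val / 2, by have := i.isLt; omega⟩ : ℝ) : ℂ) / 2)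
  else
    Complex.exp (-(I * (Real.pi : ℂ) * ((x ⟨i.val / 2, by have := i.isLt; omega⟩ : ℝ) : ℂ) / 2))

lemma continuous_phase (m : ℕ) (i : Fin (2 * m)) : Continuous fun x => phase m x i := by
  unfold phase
  split_ifs <;> fun_prop

/-- The encoding gate as a continuous matrix-valued function on the cube. -/
noncomputable def gateV (m : ℕ) : C(Cube m, Mat m) :=
  ⟨fun x => Vm m x, Continuous.matrix_diagonal
    (continuous_pi fun i => (continuous_phase m i).comp continuous_subtype_val)⟩

/-- The uniform closure of the monoid generated by the encoding gate and the constant unitaries. -/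
noncomputable def circuitMonoid (m : ℕ) : Submonoid C(Cube m, Mat m) :=
  (Submonoid.closure ({gateV m} ∪
    {F | ∃ U ∈ unitaryGroup (Fin (2 * m)) ℂ, F = ContinuousMap.const _ U})).topologicalClosure

lemma isClosed_circuitMonoid (m : ℕ) : IsClosed (circuitMonoid m : Set C(Cube m, Mat m)) :=
  Submonoid.isClosed_topologicalClosure _

lemma gateV_mem (m : ℕ) : gateV m ∈ circuitMonoid m :=
  Submonoid.le_topologicalClosure _ (Submonoid.subset_closure (Or.inl rfl))

lemma const_mem (m : ℕ) (U : Mat m) (hU : U ∈ unitaryGroup (Fin (2 * m)) ℂ) :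
    ContinuousMap.const _ U ∈ circuitMonoid m :=
  Submonoid.le_topologicalClosure _ (Submonoid.subset_closure (Or.inr ⟨U, hU, rfl⟩))

/-- The permutation exchanging the two coordinates of every qubit block. -/
def flipPerm (m : ℕ) : Equiv.Perm (Fin (2 * m)) :=
  Function.Involutive.toPerm
    (fun i => if h : i.val % 2 = 0 then ⟨i.val + 1, by omega⟩ else ⟨i.val - 1, by omega⟩)
    (fun i => by
      by_cases h : i.val % 2 = 0
      · have h2 : ¬ (i.val + 1) % 2 = 0 := by omega
        simp [h, h2]
      · have h2 : (i.val - 1) % 2 = 0 := by omega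
        have h3 : i.val - 1 + 1 = i.val := by omega
        simp [h, h2, h3])

lemma phase_mul_flip (m : ℕ) (x : Fin m → ℝ) (i : Fin (2 * m)) :
    phase m x i * phase m x (flipPerm m i) = 1 := by
  by_cases h : i.val % 2 = 0
  · have h1 : flipPerm m i = ⟨i.val + 1, by omega⟩ := by
      simp [flipPerm, Function.Involutive.toPerm, h]
    have h2 : (i.val + 1) % 2 ≠ 0 := by omega
    have h3 : (i.val + 1) / 2 = i.val / 2 := by omega
    simp only [h1, phase, h, h2, h3, if_true, if_false, ← Complex.exp_add, add_neg_cancel,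
      Complex.exp_zero]
  · have h1 : flipPerm m i = ⟨i.val - 1, by omega⟩ := by
      simp [flipPerm, Function.Involutive.toPerm, h]
    have h2 : (i.val - 1) % 2 = 0 := by omega
    have h3 : (i.val - 1) / 2 = i.val / 2 := by omega
    simp only [h1, phase, h, h2, h3, if_true, if_false, ← Complex.exp_add, neg_add_cancel,
      Complex.exp_zero]

/-- The closed monoid contains the inverse encoding gate, obtained by conjugating with the
coordinate flip. -/
lemma exists_gateV_inv (m : ℕ) :
    ∃ V' ∈ circuitMonoid m, ∀ x, V' x = diagonal fun i => phase m x (flipPerm m i) := by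
  refine ⟨ContinuousMap.const _ ((flipPerm m).permMatrix ℂ) * gateV m *
    ContinuousMap.const _ (((flipPerm m)⁻¹).permMatrix ℂ), ?_, fun x => ?_⟩
  · exact Submonoid.mul_mem _ (Submonoid.mul_mem _ (const_mem m _ (permMatrix_mem_unitary _))
      (gateV_mem m)) (const_mem m _ (permMatrix_mem_unitary _))
  · have := permMatrix_conj (flipPerm m) (Vm m x)
    refine this.trans ?_
    exact submatrix_diagonal_equiv _ (flipPerm m)

/-- `x ↦ cos (π x_k)` on the cube. -/
noncomputable def cosCoord (m : ℕ) (k : Fin m) : C(Cube m, ℝ) :=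
  ⟨fun x => Real.cos (Real.pi * x.1 k), Real.continuous_cos.comp
    (continuous_const.mul ((continuous_apply k).comp continuous_subtype_val))⟩

lemma tens_cosCoord_mem (m : ℕ) [Nonempty (Fin (2 * m))] (k : Fin m) {p q : Fin (2 * m)}
    (hpq : p ≠ q) :
    cosCoord m k ∈ coeffAlg (isClosed_circuitMonoid m) (const_mem m) hpq := by
  obtain ⟨V', hV', hv'⟩ := exists_gateV_inv m
  set i : Fin (2 * m) := ⟨2 * k.val, by omega⟩ with hi
  set j : Fin (2 * m) := ⟨2 * k.val + 1, by omega⟩ with hj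
  have hij : i ≠ j := by simp [hi, hj]
  have hfi : flipPerm m i = j := by
    simp [flipPerm, Function.Involutive.toPerm, hi, hj]
  have hfj : flipPerm m j = i := by
    simp [flipPerm, Function.Involutive.toPerm, hi, hj]
  refine tens_X_transfer (hS := isClosed_circuitMonoid m) (const_mem m) hpq hij
    (tens_cos_mem (const_mem m) (gateV_mem m) hV' (fun x => phase m x) _ (fun x => rfl) hv'
      (fun x l => phase_mul_flip m x l) hij _
      fun x => ?_)
  have hpi : phase m x i = Complex.exp (I * (Real.pi : ℂ) * ((x.1 k : ℝ) : ℂ) / 2) := by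
    simp [phase, hi]
  have hpj : phase m x j = Complex.exp (-(I * (Real.pi : ℂ) * ((x.1 k : ℝ) : ℂ) / 2)) := by
    have : (2 * k.val + 1) / 2 = k.val := by omega
    simp [phase, hj, this]
  simp only [hfi, hfj, hpi, hpj, cosCoord, ContinuousMap.coe_mk, ofReal_cos, ofReal_mul,
    ← Complex.exp_add, Complex.two_cos]
  congr 2 <;> ring

/-- By Stone–Weierstrass every continuous coefficient is admissible, since `t ↦ cos (πt)` is
injective on `[0,1]`. -/
lemma coeffAlg_eq_top (m : ℕ) [Nonempty (Fin (2 * m))] {p q : Fin (2 * m)} (hpq : p ≠ q)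
    (a : C(Cube m, ℝ)) : a ∈ coeffAlg (isClosed_circuitMonoid m) (const_mem m) hpq := by
  have hsep : (coeffAlg (isClosed_circuitMonoid m) (const_mem m) hpq).SeparatesPoints := by
    intro x y hxy
    obtain ⟨k, hk⟩ : ∃ k, x.1 k ≠ y.1 k := by
      by_contra! h
      exact hxy (Subtype.ext (funext h))
    refine ⟨_, ⟨cosCoord m k, tens_cosCoord_mem m k hpq, rfl⟩, fun h => hk ?_⟩
    have hmem : ∀ z : Cube m, Real.pi * z.1 k ∈ Set.Icc 0 Real.pi := fun z =>
      ⟨mul_nonneg Real.pi_pos.le (z.2.1 k),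
        mul_le_of_le_one_right Real.pi_pos.le (z.2.2 k)⟩
    exact mul_left_cancel₀ Real.pi_ne_zero (Real.injOn_cos (hmem x) (hmem y) h)
  have h := ContinuousMap.continuousMap_mem_subalgebra_closure_of_separatesPoints _ hsep a
  exact (isClosed_coeffAlg (hS := isClosed_circuitMonoid m) (const_mem m) hpq).closure_subset h

/-- Every continuous `f` with values in the open unit disc is a diagonal entry of an element
of the closed circuit monoid. With `f = a + ib` the element is `exp (iθ (n_z σ_z + n_x σ_x))`,
where `θ = arccos a`, `n_z = b / √(1 - a²)` and `n_x = √(1 - n_z²)`. -/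
lemma exists_entry_eq (m : ℕ) [Nonempty (Fin (2 * m))] {p q : Fin (2 * m)} (hpq : p ≠ q)
    (f : C(Cube m, ℂ)) (hf : ∀ x, ‖f x‖ < 1) :
    ∃ F ∈ circuitMonoid m, ∀ x, F x p p = f x := by
  have hsq : ∀ x, (f x).re ^ 2 + (f x).im ^ 2 < 1 := fun x => by
    have h1 := Complex.sq_norm (f x)
    rw [Complex.normSq_apply] at h1
    nlinarith [hf x, norm_nonneg (f x)]
  have hre : Continuous fun x => (f x).re := Complex.continuous_re.comp f.continuous
  have him : Continuous fun x => (f x).im := Complex.continuous_im.comp f.continuous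
  have hpos : ∀ x, 0 < 1 - (f x).re ^ 2 := fun x => by nlinarith [hsq x, sq_nonneg (f x).im]
  let θ : C(Cube m, ℝ) := ⟨fun x => Real.arccos (f x).re, Real.continuous_arccos.comp hre⟩
  let nz : C(Cube m, ℝ) := ⟨fun x => (f x).im / √(1 - (f x).re ^ 2),
    him.div (by fun_prop) fun x => (Real.sqrt_pos.2 (hpos x)).ne'⟩
  let nx : C(Cube m, ℝ) := ⟨fun x => √(1 - nz x ^ 2), by fun_prop⟩
  have hnz : ∀ x, nz x ^ 2 ≤ 1 := fun x => by
    change ((f x).im / √(1 - (f x).re ^ 2)) ^ 2 ≤ 1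
    rw [div_pow, Real.sq_sqrt (hpos x).le, div_le_one (hpos x)]
    linarith [hsq x]
  have hX : tens (matX p q) (θ * nx) ∈
      lieOf (circuitMonoid m) (isClosed_circuitMonoid m) := coeffAlg_eq_top m hpq _
  have hZ : tens (matZ p q) (θ * nz) ∈
      lieOf (circuitMonoid m) (isClosed_circuitMonoid m) :=
    tens_Z_of_X (const_mem m) hpq (coeffAlg_eq_top m hpq _)
  refine ⟨_, exp_mem_of_mem_lieOf (Submodule.add_mem _ hZ hX), fun x => ?_⟩
  rw [exp_apply]
  have hn : nz x ^ 2 + nx x ^ 2 = 1 := by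
    change nz x ^ 2 + √(1 - nz x ^ 2) ^ 2 = 1
    rw [Real.sq_sqrt (by linarith [hnz x])]
    ring
  have habs := abs_le.1 (abs_le_one_iff_mul_self_le_one.2
    (show (f x).re * (f x).re ≤ 1 by nlinarith [hpos x]))
  refine (exp_plane_apply hpq (θ x) (nz x) (nx x) hn).trans ?_
  have hc : Real.cos (θ x) = (f x).re := Real.cos_arccos habs.1 habs.2
  have hs : Real.sin (θ x) * nz x = (f x).im := by
    change Real.sin (Real.arccos (f x).re) * ((f x).im / √(1 - (f x).re ^ 2)) = _
    rw [Real.sin_arccos]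
    exact mul_div_cancel₀ _ (Real.sqrt_pos.2 (hpos x)).ne'
  rw [hc, hs, mul_comm, Complex.re_add_im]

lemma circVm_congr (m L : ℕ) (A A' : ℕ → Mat m) (h : ∀ j ≤ L, A j = A' j) (x : Fin m → ℝ) :
    circVm m L A x = circVm m L A' x := by
  induction L with
  | zero => simpa [circVm] using h 0 le_rfl
  | succ L ih =>
    rw [circVm, circVm, h _ le_rfl, ih fun j hj => h j (hj.trans L.le_succ)]

lemma const_mul_circVm (m L : ℕ) (A : ℕ → Mat m) (U : Mat m) (x : Fin m → ℝ) :
    circVm m L (Function.update A L (U * A L)) x = U * circVm m L A x := by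
  cases L with
  | zero => simp [circVm]
  | succ L =>
    rw [circVm, circVm, circVm_congr m L _ A fun j hj => ?_]
    · simp [Matrix.mul_assoc]
    · exact Function.update_of_ne (by omega) _ _

/-- Elements of the monoid, before closure, are circuits: adjacent constant unitaries merge, and an
identity separates adjacent encoding gates. -/
lemma exists_circVm_of_mem (m : ℕ) {F : C(Cube m, Mat m)}
    (hF : F ∈ Submonoid.closure ({gateV m} ∪
      {F | ∃ U ∈ unitaryGroup (Fin (2 * m)) ℂ, F = ContinuousMap.const _ U})) :
    ∃ (L : ℕ) (A : ℕ → Mat m), (∀ j, A j ∈ unitaryGroup (Fin (2 * m)) ℂ) ∧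
      ∀ x : Cube m, circVm m L A x = F x := by
  induction hF using Submonoid.closure_induction_left with
  | one => exact ⟨0, fun _ => 1, fun _ => one_mem _, fun x => rfl⟩
  | mul_left G hG F hF ih =>
    obtain ⟨L, A, hA, hx⟩ := ih
    rcases hG with rfl | ⟨U, hU, rfl⟩
    · refine ⟨L + 1, Function.update A (L + 1) 1, fun j => ?_, fun x => ?_⟩
      · by_cases hj : j = L + 1
        · subst hj; simp [one_mem]
        · rw [Function.update_of_ne hj]; exact hA j
      · rw [circVm, circVm_congr m L _ A fun j hj => Function.update_of_ne (by omega) _ _, hx x,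
          Function.update_self, one_mul]
        rfl
    · refine ⟨L, Function.update A L (U * A L), fun j => ?_, fun x => ?_⟩
      · by_cases hj : j = L
        · subst hj; rw [Function.update_self]; exact mul_mem hU (hA _)
        · rw [Function.update_of_ne hj]; exact hA j
      · rw [const_mul_circVm, hx x]
        rfl

/-- Uniform approximation of matrix-valued functions gives uniform approximation of entries. -/
lemma exists_circVm_near (m : ℕ) {F : C(Cube m, Mat m)} (hF : F ∈ circuitMonoid m)
    (p : Fin (2 * m)) {ε : ℝ} (hε : 0 < ε) :
    ∃ (L : ℕ) (A : ℕ → Mat m), (∀ j, A j ∈ unitaryGroup (Fin (2 * m)) ℂ) ∧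
      ∀ x : Cube m, ‖circVm m L A x p p - F x p p‖ < ε := by
  let entry : C(Mat m, ℂ) := ⟨fun M => M p p, by fun_prop⟩
  have hcont : Continuous fun G : C(Cube m, Mat m) => entry.comp G :=
    ContinuousMap.continuous_postcomp entry
  have hmem := map_mem_closure hcont (show F ∈ closure _ from hF)
    (fun G hG => Set.mem_image_of_mem _ hG)
  obtain ⟨_, ⟨G, hG, rfl⟩, hd⟩ := Metric.mem_closure_iff.1 hmem ε hε
  obtain ⟨L, A, hA, hx⟩ := exists_circVm_of_mem m hG
  refine ⟨L, A, hA, fun x => ?_⟩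
  have := (ContinuousMap.dist_lt_iff hε).1 hd x
  rw [hx x, ← dist_eq_norm, dist_comm]
  exact this

end Circuit

/-! ### Universality -/

/-- Universality of the multi-qubit circuit with fixed encoding gates `V_m(x)` interleaved
with trainable unitaries, in the sup norm on `[0,1]^m`, for continuous `f` with `|f| ≤ 1`. -/
theorem multiqubit_Vm_universal (m : ℕ) (hm : 1 ≤ m) (f : (Fin m → ℝ) → ℂ)
    (hf : ContinuousOn f (Set.Icc 0 1))
    (hbd : ∀ x ∈ Set.Icc (0 : Fin m → ℝ) 1, ‖f x‖ ≤ 1)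
    (ε : ℝ) (hε : 0 < ε) :
    ∃ (L : ℕ) (A : ℕ → Matrix (Fin (2*m)) (Fin (2*m)) ℂ),
      (∀ j, A j ∈ Matrix.unitaryGroup (Fin (2*m)) ℂ) ∧
      ∀ x ∈ Set.Icc (0 : Fin m → ℝ) 1,
        ‖(circVm m L A x) ⟨0, by omega⟩ ⟨0, by omega⟩ - f x‖ ≤ ε := by
  have : Nonempty (Fin (2 * m)) := ⟨⟨0, by omega⟩⟩
  -- shrinking `f` slightly keeps it inside the open unit disc
  set δ := min (ε / 2) (1 / 2) with hδ
  have hδ0 : 0 < δ := by positivity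
  have hδ1 : δ ≤ 1 / 2 := min_le_right _ _
  have hδε : δ ≤ ε / 2 := min_le_left _ _
  let g : C(Cube m, ℂ) := ⟨fun x => ((1 - δ : ℝ) : ℂ) * f x,
    continuous_const.mul (continuousOn_iff_continuous_domRestrict.1 hf)⟩
  have hg : ∀ x, ‖g x‖ < 1 := fun x => by
    change ‖((1 - δ : ℝ) : ℂ) * f x‖ < 1
    rw [norm_mul, Complex.norm_real, Real.norm_of_nonneg (by linarith)]
    nlinarith [hbd x x.2, norm_nonneg (f x)]
  have hpq : (⟨0, by omega⟩ : Fin (2 * m)) ≠ ⟨1, by omega⟩ := by simp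
  obtain ⟨F, hF, hFg⟩ := exists_entry_eq m hpq g hg
  obtain ⟨L, A, hA, hx⟩ := exists_circVm_near m hF ⟨0, by omega⟩ (half_pos hε)
  refine ⟨L, A, hA, fun x hxK => ?_⟩
  have h1 := hx ⟨x, hxK⟩
  rw [hFg] at h1
  have h2 : ‖g ⟨x, hxK⟩ - f x‖ ≤ δ := by
    have e : g ⟨x, hxK⟩ - f x = -((δ : ℝ) : ℂ) * f x := by
      change ((1 - δ : ℝ) : ℂ) * f x - f x = _
      push_cast
      ring
    rw [e, norm_mul, norm_neg, Complex.norm_real, Real.norm_of_nonneg hδ0.le]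
    exact mul_le_of_le_one_right hδ0.le (hbd x hxK)
  have h3 := norm_sub_le_norm_sub_add_norm_sub (circVm m L A x ⟨0, by omega⟩ ⟨0, by omega⟩)
    (g ⟨x, hxK⟩) (f x)
  linarith
end
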